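/- For n ≥ 1, the number of elements of ONC_{2n+1} (permutations x ≤_3 (1 2 ... 2n+1) in A_{2n+1}) is (1/(n+1)) C(3n+1, n), and the number of maximal chains of the interval [e, (1 2 ... 2n+1)]_3 is (2n+1)^{n-1}. -/

import Mathlib

open Equiv Equiv.Perm

/-- The word length of `x` with respect to a generating set `T`. -/
noncomputable def lenT {G : Type*} [Group G] (T : Set G) (x : G) : ℕ :=
  sInf {n | ∃ l : List G, (∀ t ∈ l, t ∈ T) ∧ l.prod = x ∧ l.length = n}

/-- The `T`-prefix order. -/
def leT {G : Type*} [Group G] (T : Set G) (x y : G) : Prop :=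
  lenT T y = lenT T x + lenT T (x⁻¹ * y)

/-- The set of 3-cycles of the symmetric group on `Fin N`. -/
def threeCycles (N : ℕ) : Set (Perm (Fin N)) := {σ | σ.IsThreeCycle}

/-- The set of transpositions of the symmetric group on `Fin N`. -/
def transpositions (N : ℕ) : Set (Perm (Fin N)) := {σ | σ.IsSwap}

/-- The number of odd cycles of a permutation, counting fixed points. -/
def ocyc {N : ℕ} (x : Perm (Fin N)) : ℕ :=
  (x.cycleType.filter (fun n => Odd n)).card + (N - x.cycleType.sum)

/-!
Multiplying `c` by a 3-cycle changes the number of cycles by at most two, and it raises it by two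
exactly when it cuts one cycle of `c`, of length `L`, into three, of lengths `k`, `l - k` and
`L - l` with `0 < k < l < L`. Hence permutations with odd cycles have 3-cycle length
`(N - numCycles) / 2`, and both counts satisfy recursions over such cuts.

*Factorizations.* Removing the last factor from a minimal factorization of `c` cuts one cycle into
three. Among products over the cycles of `c`, the recursion is solved by `m!` times the product of
`(2 n + 1) ^ (n - 1) / n!` over the cycles, of lengths `2 n + 1`, by Abel's identity.

*Prefixes.* Fix a moved point `a`. If `x ≤ c` and `x a ≠ c a`, splitting off `x⁻¹ c` the 3-cycle
that starts at `a` cuts `c` into three cycles, on two of which `x` is constrained to agree with `c`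
at one point. So one counts, more generally, the prefixes that fix the points of a set `S` and
agree with `c` on a set `D`, with at most one such mark on each cycle. The Kreweras complement
`x ↦ x⁻¹ c` exchanges the two kinds of marks, and the recursion closes up: a cycle of length
`2 n + 1` contributes the Raney number `raney 3 n 1` if it is marked and `raney 3 n 2` if not.
-/

open Function (minimalPeriod)

section CycleLengths

variable {α : Type*}

lemma sameCycle_iterate (c : Perm α) (x : α) (m : ℕ) : c.SameCycle x (c^[m] x) :=
  ⟨m, by rw [zpow_natCast, iterate_eq_pow]⟩

lemma iterate_ne_of_pos_of_lt_minimalPeriod {c : Perm α} {x : α} {m : ℕ} (hm : 0 < m)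
    (hlt : m < minimalPeriod c x) : c^[m] x ≠ x := fun h =>
  hlt.not_ge (Function.IsPeriodicPt.minimalPeriod_le hm h)

section Finite

variable [Finite α] {c : Perm α} {x y : α}

lemma minimalPeriod_perm_pos (c : Perm α) (x : α) : 0 < minimalPeriod c x :=
  Function.minimalPeriod_pos_of_mem_periodicPts (c.injective.mem_periodicPts x)

lemma exists_iterate_eq_of_sameCycle (h : c.SameCycle x y) :
    ∃ m < minimalPeriod c x, c^[m] x = y := by
  obtain ⟨m, hm⟩ := h.exists_nat_pow_eq
  refine ⟨m % minimalPeriod c x, Nat.mod_lt _ (minimalPeriod_perm_pos c x), ?_⟩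
  rw [Function.iterate_mod_minimalPeriod_eq, iterate_eq_pow, hm]

lemma exists_iterate_eq_of_sameCycle_of_ne (hxy : x ≠ y) (h : c.SameCycle x y) :
    ∃ k, 0 < k ∧ k < minimalPeriod c x ∧ c^[k] x = y := by
  obtain ⟨k, hk, hky⟩ := exists_iterate_eq_of_sameCycle h
  refine ⟨k, Nat.pos_of_ne_zero ?_, hk, hky⟩
  rintro rfl
  exact hxy hky

lemma minimalPeriod_iterate (c : Perm α) (x : α) (m : ℕ) :
    minimalPeriod c (c^[m] x) = minimalPeriod c x :=
  Function.minimalPeriod_apply_iterate (c.injective.mem_periodicPts x) m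

lemma minimalPeriod_eq_of_forall_iterate_ne {k : ℕ} (hk : 0 < k) (hper : c^[k] x = x)
    (hne : ∀ m, 0 < m → m < k → c^[m] x ≠ x) : minimalPeriod c x = k := by
  refine (Function.IsPeriodicPt.minimalPeriod_le hk hper).eq_of_not_lt fun hlt => ?_
  exact hne _ (minimalPeriod_perm_pos c x) hlt Function.iterate_minimalPeriod

end Finite

variable [Fintype α]

lemma sum_sameCycle_eq_sum_range {M : Type*} [AddCommMonoid M] (c : Perm α) (a : α)
    [DecidablePred (c.SameCycle a)] (f : α → M) :
    ∑ x with c.SameCycle a x, f x = ∑ m ∈ Finset.range (minimalPeriod c a), f (c^[m + 1] a) := by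
  symm
  refine Finset.sum_bij (fun m _ => c^[m + 1] a) ?_ ?_ ?_ fun _ _ => rfl
  · intro m _
    simpa using sameCycle_iterate c a (m + 1)
  · intro m hm n hn h
    rw [Function.iterate_succ_apply', Function.iterate_succ_apply'] at h
    exact (Function.iterate_eq_iterate_iff_of_lt_minimalPeriod (Finset.mem_range.1 hm)
      (Finset.mem_range.1 hn)).1 (c.injective h)
  · intro x hx
    have hx : c.SameCycle a (c⁻¹ x) := by simpa using hx
    obtain ⟨m, hm, hmx⟩ := exists_iterate_eq_of_sameCycle hx
    refine ⟨m, Finset.mem_range.2 hm, ?_⟩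
    rw [Function.iterate_succ_apply', hmx]
    exact c.apply_symm_apply x

variable [DecidableEq α]

lemma minimalPeriod_eq_card_support_cycleOf {c : Perm α} {x : α} (hx : c x ≠ x) :
    minimalPeriod c x = (c.cycleOf x).support.card := by
  have hmem : x ∈ (c.cycleOf x).support := mem_support_cycleOf_iff.2 ⟨.refl _ _, by simpa⟩
  refine Nat.dvd_right_iff_eq.1 fun n => ?_
  rw [← Function.isPeriodicPt_iff_minimalPeriod_dvd,
    ← (c.isCycleOn_support_cycleOf x).pow_apply_eq hmem, ← iterate_eq_pow]
  rfl

lemma sum_fiber_cycleOf {M : Type*} [AddCommMonoid M] {c g : Perm α} (f : ℕ → M)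
    (hg : g ∈ c.cycleFactorsFinset) :
    ∑ x ∈ c.support with c.cycleOf x = g, f (minimalPeriod c x)
      = g.support.card • f g.support.card := by
  have hfiber : {x ∈ c.support | c.cycleOf x = g} = g.support := by
    ext x
    simp only [Finset.mem_filter, eq_comm (a := c.cycleOf x),
      eq_cycleOf_of_mem_cycleFactorsFinset_iff c g hg, and_iff_right_iff_imp]
    exact fun hx => mem_cycleFactorsFinset_support_le hg hx
  rw [Finset.sum_congr hfiber fun x hx => ?_, Finset.sum_const]
  have hgx := (eq_cycleOf_of_mem_cycleFactorsFinset_iff c g hg x).2 hx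
  have hcx : c x ≠ x := by simpa using mem_cycleFactorsFinset_support_le hg hx
  rw [minimalPeriod_eq_card_support_cycleOf hcx, ← hgx]

theorem sum_comp_minimalPeriod {M : Type*} [AddCommMonoid M] (c : Perm α) (f : ℕ → M) :
    ∑ x, f (minimalPeriod c x) = (c.partition.parts.map fun L => L • f L).sum := by
  have hmoved : ∑ x ∈ c.support, f (minimalPeriod c x)
      = (c.cycleType.map fun L => L • f L).sum := by
    rw [← Finset.sum_fiberwise_of_maps_to (t := c.cycleFactorsFinset) (g := c.cycleOf)
      fun x hx => cycleOf_mem_cycleFactorsFinset_iff.2 hx, cycleType_def, Multiset.map_map]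
    exact Finset.sum_congr rfl fun g hg => sum_fiber_cycleOf f hg
  have hfixed : ∑ x ∈ c.supportᶜ, f (minimalPeriod c x)
      = (Fintype.card α - c.support.card) • f 1 := by
    rw [← Finset.card_compl, ← Finset.sum_const]
    refine Finset.sum_congr rfl fun x hx => ?_
    rw [Function.minimalPeriod_eq_one_iff_isFixedPt.2 (notMem_support.1 (Finset.mem_compl.1 hx))]
  rw [← Finset.sum_add_sum_compl c.support, hmoved, hfixed, parts_partition, Multiset.map_add,
    Multiset.sum_add, Multiset.map_replicate, Multiset.sum_replicate, one_nsmul]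

end CycleLengths

section Partition

lemma sum_map_nsmul_ite_eq (s : Multiset ℕ) (m : ℕ) :
    (s.map fun L => L • if L = m then 1 else 0).sum = m * s.count m := by
  induction s using Multiset.induction_on with
  | empty => simp
  | cons L s ih =>
    rw [Multiset.map_cons, Multiset.sum_cons, ih, Multiset.count_cons]
    rcases eq_or_ne L m with rfl | hL
    · simp [mul_add, add_comm]
    · simp [hL, hL.symm]

lemma eq_of_forall_sum_map_nsmul_eq {s t : Multiset ℕ} (hs : 0 ∉ s) (ht : 0 ∉ t)
    (h : ∀ f : ℕ → ℕ, (s.map fun L => L • f L).sum = (t.map fun L => L • f L).sum) : s = t := by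
  ext m
  rcases Nat.eq_zero_or_pos m with rfl | hm
  · rw [Multiset.count_eq_zero.2 hs, Multiset.count_eq_zero.2 ht]
  · have := h fun L => if L = m then 1 else 0
    rw [sum_map_nsmul_ite_eq, sum_map_nsmul_ite_eq] at this
    exact Nat.eq_of_mul_eq_mul_left hm this

variable {α : Type*} [Fintype α] [DecidableEq α] {c : Perm α}

lemma zero_notMem_parts (c : Perm α) : 0 ∉ c.partition.parts := fun h =>
  (c.partition.parts_pos h).false

lemma minimalPeriod_mem_parts (c : Perm α) (a : α) : minimalPeriod c a ∈ c.partition.parts := by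
  have hsum := sum_comp_minimalPeriod c fun L => if L = minimalPeriod c a then 1 else 0
  rw [sum_map_nsmul_ite_eq] at hsum
  by_contra h
  rw [Multiset.count_eq_zero.2 h, mul_zero, Finset.sum_eq_zero_iff] at hsum
  simpa using hsum a (Finset.mem_univ a)

lemma partition_inv (c : Perm α) : c⁻¹.partition = c.partition := by
  ext1
  rw [parts_partition, parts_partition, cycleType_inv, support_inv]

lemma partition_mul_comm (c d : Perm α) : (c * d).partition = (d * c).partition :=
  partition_eq_of_isConj.1 (isConj_iff.2 ⟨d, by group⟩)

/-- The number of cycles of a permutation, fixed points included. -/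
def numCycles (c : Perm α) : ℕ := c.partition.parts.card

lemma numCycles_le_card (c : Perm α) : numCycles c ≤ Fintype.card α := by
  have h := Multiset.card_nsmul_le_sum fun m (hm : m ∈ c.partition.parts) =>
    Nat.one_le_iff_ne_zero.2 (c.partition.parts_pos hm).ne'
  rwa [c.partition.parts_sum, smul_eq_mul, mul_one] at h

lemma numCycles_one : numCycles (1 : Perm α) = Fintype.card α := by
  simp [numCycles, parts_partition]

lemma eq_one_of_numCycles_eq_card (h : numCycles c = Fintype.card α) : c = 1 := by
  ext a
  obtain ⟨s, hs⟩ := Multiset.exists_cons_of_mem (minimalPeriod_mem_parts c a)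
  have hcard : s.card ≤ s.sum := by
    simpa using Multiset.card_nsmul_le_sum fun m (hm : m ∈ s) =>
      Nat.one_le_iff_ne_zero.2 (c.partition.parts_pos (hs ▸ Multiset.mem_cons_of_mem hm)).ne'
  have hsum := c.partition.parts_sum
  rw [numCycles, hs, Multiset.card_cons] at h
  rw [hs, Multiset.sum_cons] at hsum
  refine Function.minimalPeriod_eq_one_iff_isFixedPt.1 ?_
  have := minimalPeriod_perm_pos c a
  omega

lemma numCycles_inv (c : Perm α) : numCycles c⁻¹ = numCycles c := by
  rw [numCycles, partition_inv, numCycles]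

lemma numCycles_mul_comm (c d : Perm α) : numCycles (c * d) = numCycles (d * c) := by
  rw [numCycles, partition_mul_comm, numCycles]

/-- All cycles of the permutation have odd length. -/
def HasOddCycles (c : Perm α) : Prop := ∀ m ∈ c.partition.parts, Odd m

/-- The product over the cycles of `c`, fixed points included, of a weight depending only on the
length of the cycle. -/
def cycleWeight {M : Type*} [CommMonoid M] (φ : ℕ → M) (c : Perm α) : M :=
  (c.partition.parts.map φ).prod

/-- `cycleWeight φ c` without the factor contributed by the cycle through `a`. -/
noncomputable def cofactorWeight {M : Type*} [CommMonoid M] (φ : ℕ → M) (c : Perm α) (a : α) : M :=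
  ((c.partition.parts.erase (minimalPeriod c a)).map φ).prod

lemma cycleWeight_eq_mul_cofactorWeight {M : Type*} [CommMonoid M] (φ : ℕ → M) (c : Perm α)
    (a : α) : cycleWeight φ c = φ (minimalPeriod c a) * cofactorWeight φ c a := by
  rw [cycleWeight, cofactorWeight, ← Multiset.prod_cons, ← Multiset.map_cons,
    Multiset.cons_erase (minimalPeriod_mem_parts c a)]

end Partition

section Bisection

variable {α : Type*} [DecidableEq α]

/-- `c` multiplied by the transposition of `a` and `c^[k] a`. For `0 < k < minimalPeriod c a` this
cuts the cycle through `a` into a cycle of length `k` through `c^[k] a` and one of the remaining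
length through `a`. -/
def bisect (c : Perm α) (a : α) (k : ℕ) : Perm α := c * swap a (c^[k] a)

variable {c : Perm α} {a x y : α} {k m : ℕ}

lemma bisect_apply_of_ne (hxa : x ≠ a) (hxk : x ≠ c^[k] a) : bisect c a k x = c x := by
  rw [bisect, Perm.mul_apply, swap_apply_of_ne_of_ne hxa hxk]

lemma iterate_bisect_cut (hk : k < minimalPeriod c a) (hm : m < k) :
    (bisect c a k)^[m + 1] (c^[k] a) = c^[m + 1] a := by
  induction m with
  | zero => simp [bisect]
  | succ m ih =>
    rw [Function.iterate_succ_apply', ih (by omega), Function.iterate_succ_apply' c (m + 1)]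
    refine bisect_apply_of_ne
      (iterate_ne_of_pos_of_lt_minimalPeriod (by omega) (by omega)) fun h => ?_
    exact hm.ne ((Function.iterate_eq_iterate_iff_of_lt_minimalPeriod (by omega) hk).1 h)

lemma iterate_bisect_base (hk : 0 < k) (hm : k + m < minimalPeriod c a) :
    (bisect c a k)^[m + 1] a = c^[k + m + 1] a := by
  induction m with
  | zero => simp [bisect, Function.iterate_succ_apply']
  | succ m ih =>
    rw [Function.iterate_succ_apply', ih (by omega), Function.iterate_succ_apply' c (k + (m + 1))]
    refine bisect_apply_of_ne
      (iterate_ne_of_pos_of_lt_minimalPeriod (by omega) (by omega)) fun h => ?_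
    have := (Function.iterate_eq_iterate_iff_of_lt_minimalPeriod hm (by omega)).1 h
    omega

lemma iterate_bisect_of_not_sameCycle (hx : ¬ c.SameCycle a x) :
    (bisect c a k)^[m] x = c^[m] x := by
  induction m with
  | zero => rfl
  | succ m ih =>
    rw [Function.iterate_succ_apply', ih, Function.iterate_succ_apply']
    refine bisect_apply_of_ne (fun h => hx ?_) fun h => hx ?_
    · exact h ▸ (sameCycle_iterate c x m).symm
    · exact (sameCycle_iterate c a k).trans (h ▸ (sameCycle_iterate c x m).symm)

section Finite

variable [Finite α]

lemma minimalPeriod_bisect_cut (hk : 0 < k) (hkL : k < minimalPeriod c a) :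
    minimalPeriod (bisect c a k) (c^[k] a) = k := by
  refine minimalPeriod_eq_of_forall_iterate_ne hk ?_ fun m hm hmk h => ?_
  · obtain ⟨j, rfl⟩ := Nat.exists_eq_add_of_lt hk
    simpa using iterate_bisect_cut hkL (Nat.lt_succ_self _)
  · obtain ⟨j, rfl⟩ := Nat.exists_eq_add_of_lt hm
    rw [zero_add, iterate_bisect_cut hkL (by omega)] at h
    have := (Function.iterate_eq_iterate_iff_of_lt_minimalPeriod (by omega) hkL).1 h
    omega

lemma minimalPeriod_bisect_base (hk : 0 < k) (hkL : k < minimalPeriod c a) :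
    minimalPeriod (bisect c a k) a = minimalPeriod c a - k := by
  refine minimalPeriod_eq_of_forall_iterate_ne (by omega) ?_ fun m hm hmk h => ?_
  · obtain ⟨j, hj⟩ := Nat.exists_eq_add_of_lt hkL
    rw [show minimalPeriod c a - k = j + 1 by omega, iterate_bisect_base hk (by omega), ← hj,
      Function.iterate_minimalPeriod]
  · obtain ⟨j, rfl⟩ := Nat.exists_eq_add_of_lt hm
    rw [zero_add, iterate_bisect_base hk (by omega)] at h
    exact iterate_ne_of_pos_of_lt_minimalPeriod (by omega) (by omega) h

lemma minimalPeriod_bisect_of_not_sameCycle (hx : ¬ c.SameCycle a x) :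
    minimalPeriod (bisect c a k) x = minimalPeriod c x := by
  refine minimalPeriod_eq_of_forall_iterate_ne (minimalPeriod_perm_pos c x) ?_ fun m hm hmk => ?_
  · rw [iterate_bisect_of_not_sameCycle hx, Function.iterate_minimalPeriod]
  · rw [iterate_bisect_of_not_sameCycle hx]
    exact iterate_ne_of_pos_of_lt_minimalPeriod hm hmk

lemma sameCycle_of_bisect (h : (bisect c a k).SameCycle x y) : c.SameCycle x y := by
  have hstep (z : α) : c.SameCycle z (bisect c a k z) := by
    refine SameCycle.trans (y := swap a (c^[k] a) z) ?_ (sameCycle_iterate c _ 1)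
    rcases eq_or_ne z a with rfl | hza
    · rw [swap_apply_left]
      exact sameCycle_iterate _ _ _
    · rcases eq_or_ne z (c^[k] a) with rfl | hzk
      · rw [swap_apply_right]
        exact (sameCycle_iterate _ _ _).symm
      · rw [swap_apply_of_ne_of_ne hza hzk]
  obtain ⟨m, -, rfl⟩ := exists_iterate_eq_of_sameCycle h
  clear h
  induction m with
  | zero => exact SameCycle.refl _ _
  | succ m ih =>
    rw [Function.iterate_succ_apply']
    exact ih.trans (hstep _)

lemma not_sameCycle_bisect (hk : 0 < k) (hkL : k < minimalPeriod c a) :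
    ¬ (bisect c a k).SameCycle (c^[k] a) a := by
  intro h
  obtain ⟨m, hm, hma⟩ := exists_iterate_eq_of_sameCycle h
  rw [minimalPeriod_bisect_cut hk hkL] at hm
  rcases m with _ | m
  · exact iterate_ne_of_pos_of_lt_minimalPeriod hk hkL hma
  · rw [iterate_bisect_cut hkL (by omega)] at hma
    exact iterate_ne_of_pos_of_lt_minimalPeriod (by omega) (by omega) hma

end Finite

variable [Fintype α]

lemma sum_comp_minimalPeriod_bisect (hk : 0 < k) (hkL : k < minimalPeriod c a) (f : ℕ → ℕ) :
    ∑ x, f (minimalPeriod (bisect c a k) x) + minimalPeriod c a • f (minimalPeriod c a)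
      = ∑ x, f (minimalPeriod c x) + k • f k
        + (minimalPeriod c a - k) • f (minimalPeriod c a - k) := by
  classical
  have hold : ∑ m ∈ Finset.range (minimalPeriod c a), f (minimalPeriod c (c^[m + 1] a))
      = minimalPeriod c a • f (minimalPeriod c a) := by
    simp only [minimalPeriod_iterate, Finset.sum_const, Finset.card_range]
  have hnew : ∑ m ∈ Finset.range (minimalPeriod c a), f (minimalPeriod (bisect c a k) (c^[m + 1] a))
      = k • f k + (minimalPeriod c a - k) • f (minimalPeriod c a - k) := by
    rw [← Finset.sum_range_add_sum_Ico _ hkL.le, Finset.sum_Ico_eq_sum_range]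
    congr 1
    · rw [Finset.sum_congr rfl fun m hm => ?_, Finset.sum_const, Finset.card_range]
      rw [← iterate_bisect_cut hkL (Finset.mem_range.1 hm), minimalPeriod_iterate,
        minimalPeriod_bisect_cut hk hkL]
    · rw [Finset.sum_congr rfl fun m hm => ?_, Finset.sum_const, Finset.card_range]
      rw [← iterate_bisect_base hk (by have := Finset.mem_range.1 hm; omega),
        minimalPeriod_iterate, minimalPeriod_bisect_base hk hkL]
  have hrest : ∑ x with ¬ c.SameCycle a x, f (minimalPeriod (bisect c a k) x)
      = ∑ x with ¬ c.SameCycle a x, f (minimalPeriod c x) :=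
    Finset.sum_congr rfl fun x hx => by
      rw [minimalPeriod_bisect_of_not_sameCycle (Finset.mem_filter.1 hx).2]
  rw [← Finset.sum_filter_add_sum_filter_not Finset.univ (c.SameCycle a),
    ← Finset.sum_filter_add_sum_filter_not Finset.univ (c.SameCycle a) fun x =>
      f (minimalPeriod c x),
    sum_sameCycle_eq_sum_range, sum_sameCycle_eq_sum_range, hold, hnew, hrest]
  ring

theorem parts_bisect (hk : 0 < k) (hkL : k < minimalPeriod c a) :
    (bisect c a k).partition.parts
      = k ::ₘ (minimalPeriod c a - k) ::ₘ c.partition.parts.erase (minimalPeriod c a) := by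
  have hL : minimalPeriod c a ∈ c.partition.parts := minimalPeriod_mem_parts c a
  refine eq_of_forall_sum_map_nsmul_eq (zero_notMem_parts _) ?_ fun f => ?_
  · have herase : 0 ∉ c.partition.parts.erase (minimalPeriod c a) := fun h =>
      zero_notMem_parts c (Multiset.mem_of_mem_erase h)
    simpa [hk.ne, (Nat.sub_pos_of_lt hkL).ne] using herase
  · have hsum := sum_comp_minimalPeriod_bisect hk hkL f
    rw [sum_comp_minimalPeriod, sum_comp_minimalPeriod, ← Multiset.cons_erase hL] at hsum
    simp only [Multiset.map_cons, Multiset.sum_cons] at hsum ⊢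
    omega

lemma numCycles_bisect (hk : 0 < k) (hkL : k < minimalPeriod c a) :
    numCycles (bisect c a k) = numCycles c + 1 := by
  rw [numCycles, numCycles, parts_bisect hk hkL, Multiset.card_cons, Multiset.card_cons,
    Multiset.card_erase_add_one (minimalPeriod_mem_parts c a)]

end Bisection

section MulSwap

variable {α : Type*} [DecidableEq α] {c : Perm α} {a b : α}

lemma sameCycle_mul_swap_of_not_sameCycle [Finite α] (h : ¬ c.SameCycle a b) :
    (c * swap a b).SameCycle a b := by
  have hiter : ∀ m < minimalPeriod c b, (c * swap a b)^[m + 1] a = c^[m + 1] b := by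
    intro m hm
    induction m with
    | zero => simp
    | succ m ih =>
      rw [Function.iterate_succ_apply', ih (by omega), Function.iterate_succ_apply' c (m + 1),
        Perm.mul_apply, swap_apply_of_ne_of_ne (fun h' => h ?_)
          (iterate_ne_of_pos_of_lt_minimalPeriod (by omega) hm)]
      exact h' ▸ (sameCycle_iterate c b (m + 1)).symm
  obtain ⟨j, hj⟩ := Nat.exists_eq_add_of_lt (minimalPeriod_perm_pos c b)
  have hb := hiter j (by omega)
  rw [show j + 1 = minimalPeriod c b by omega, Function.iterate_minimalPeriod] at hb
  have hsame := sameCycle_iterate (c * swap a b) a (minimalPeriod c b)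
  rwa [hb] at hsame

variable [Fintype α]

lemma numCycles_mul_swap_of_sameCycle (hab : a ≠ b) (h : c.SameCycle a b) :
    numCycles (c * swap a b) = numCycles c + 1 := by
  obtain ⟨k, hk, hkL, rfl⟩ := exists_iterate_eq_of_sameCycle_of_ne hab h
  exact numCycles_bisect hk hkL

lemma numCycles_mul_swap_of_not_sameCycle (h : ¬ c.SameCycle a b) :
    numCycles (c * swap a b) + 1 = numCycles c := by
  have hab : a ≠ b := fun hab => h (hab ▸ SameCycle.refl _ _)
  rw [← numCycles_mul_swap_of_sameCycle hab (sameCycle_mul_swap_of_not_sameCycle h),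
    mul_swap_mul_self]

lemma numCycles_mul_swap_le (c : Perm α) (a b : α) :
    numCycles (c * swap a b) ≤ numCycles c + 1 := by
  rcases eq_or_ne a b with rfl | hab
  · simp [swap_self, ← Perm.one_def]
  · by_cases h : c.SameCycle a b
    · exact (numCycles_mul_swap_of_sameCycle hab h).le
    · have := numCycles_mul_swap_of_not_sameCycle h
      omega

end MulSwap

section Trisection

/-- The pairs of positions `0 < k < l < L`, which cut a cycle of length `L` into cycles of lengths
`k`, `l - k` and `L - l`. -/
structure IsCutPair (L k l : ℕ) : Prop where
  pos : 0 < k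
  lt : k < l
  lt_length : l < L

/-- The finite set of cut pairs of a cycle of length `L`. -/
def cutPairs (L : ℕ) : Finset (ℕ × ℕ) :=
  {p ∈ Finset.range L ×ˢ Finset.range L | 0 < p.1 ∧ p.1 < p.2}

lemma mem_cutPairs {L : ℕ} {p : ℕ × ℕ} : p ∈ cutPairs L ↔ IsCutPair L p.1 p.2 := by
  simp only [cutPairs, Finset.mem_filter, Finset.mem_product, Finset.mem_range]
  exact ⟨fun ⟨⟨_, h⟩, h₀, h₁⟩ => ⟨h₀, h₁, h⟩, fun ⟨h₀, h₁, h⟩ => ⟨⟨h₁.trans h, h⟩, h₀, h₁⟩⟩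

lemma cutPairs_one : cutPairs 1 = ∅ := rfl

namespace IsCutPair

lemma pos_right {L k l : ℕ} (h : IsCutPair L k l) : 0 < l := h.pos.trans h.lt

variable {α : Type*} {c : Perm α} {a : α} {k l : ℕ}

lemma iterate_ne_left (h : IsCutPair (minimalPeriod c a) k l) : a ≠ c^[k] a :=
  (iterate_ne_of_pos_of_lt_minimalPeriod h.pos (h.lt.trans h.lt_length)).symm

lemma iterate_ne_right (h : IsCutPair (minimalPeriod c a) k l) : a ≠ c^[l] a :=
  (iterate_ne_of_pos_of_lt_minimalPeriod h.pos_right h.lt_length).symm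

lemma iterate_ne_iterate (h : IsCutPair (minimalPeriod c a) k l) : c^[k] a ≠ c^[l] a := fun he =>
  h.lt.ne <| (Function.iterate_eq_iterate_iff_of_lt_minimalPeriod (h.lt.trans h.lt_length)
    h.lt_length).1 he

lemma eq_of_iterate_eq {p q : ℕ × ℕ} (hp : IsCutPair (minimalPeriod c a) p.1 p.2)
    (hq : IsCutPair (minimalPeriod c a) q.1 q.2) (hleft : c^[p.1] a = c^[q.1] a)
    (hright : c^[p.2] a = c^[q.2] a) : p = q :=
  Prod.ext
    ((Function.iterate_eq_iterate_iff_of_lt_minimalPeriod (hp.lt.trans hp.lt_length)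
      (hq.lt.trans hq.lt_length)).1 hleft)
    ((Function.iterate_eq_iterate_iff_of_lt_minimalPeriod hp.lt_length hq.lt_length).1 hright)

end IsCutPair

variable {α : Type*} [DecidableEq α]

/-- `c` multiplied by the inverse of the 3-cycle `a → c^[k] a → c^[l] a → a`. For a cut pair this
cuts the cycle through `a` into cycles of lengths `k`, `l - k` and `L - l` through `c^[k] a`,
`c^[l] a` and `a`. -/
def trisect (c : Perm α) (a : α) (k l : ℕ) : Perm α :=
  c * (swap a (c^[k] a) * swap (c^[k] a) (c^[l] a))⁻¹

variable {c t : Perm α} {a i j x y : α} {k l m : ℕ}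

lemma inv_swap_mul_swap (hai : a ≠ i) (haj : a ≠ j) :
    (swap a i * swap i j)⁻¹ = swap a j * swap j i := by
  rw [mul_inv_rev, swap_inv, swap_inv, swap_comm a j, swap_comm j i,
    ← swap_mul_swap_mul_swap hai haj, mul_swap_mul_self]

lemma isThreeCycle_swap_mul_swap [Fintype α] (hai : a ≠ i) (haj : a ≠ j) (hij : i ≠ j) :
    (swap a i * swap i j).IsThreeCycle := by
  rw [swap_comm a i]
  exact isThreeCycle_swap_mul_swap_same hai.symm hij haj

namespace IsCutPair

lemma iterate_bisect (h : IsCutPair (minimalPeriod c a) k l) :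
    (bisect c a l)^[k] (c^[l] a) = c^[k] a := by
  obtain ⟨j, rfl⟩ := Nat.exists_eq_add_of_lt h.pos
  exact iterate_bisect_cut h.lt_length (by have := h.lt; omega)

lemma trisect_eq_bisect_bisect (h : IsCutPair (minimalPeriod c a) k l) :
    trisect c a k l = bisect (bisect c a l) (c^[l] a) k := by
  rw [trisect, inv_swap_mul_swap h.iterate_ne_left h.iterate_ne_right, ← mul_assoc]
  conv_rhs => rw [bisect, h.iterate_bisect, bisect]

section Finite

variable [Finite α]

lemma lt_minimalPeriod_bisect (h : IsCutPair (minimalPeriod c a) k l) :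
    k < minimalPeriod (bisect c a l) (c^[l] a) := by
  rw [minimalPeriod_bisect_cut h.pos_right h.lt_length]
  exact h.lt

lemma minimalPeriod_trisect_left (h : IsCutPair (minimalPeriod c a) k l) :
    minimalPeriod (trisect c a k l) (c^[k] a) = k := by
  rw [h.trisect_eq_bisect_bisect]
  conv_lhs => rw [← h.iterate_bisect]
  exact minimalPeriod_bisect_cut h.pos h.lt_minimalPeriod_bisect

lemma minimalPeriod_trisect_right (h : IsCutPair (minimalPeriod c a) k l) :
    minimalPeriod (trisect c a k l) (c^[l] a) = l - k := by
  rw [h.trisect_eq_bisect_bisect, minimalPeriod_bisect_base h.pos h.lt_minimalPeriod_bisect,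
    minimalPeriod_bisect_cut h.pos_right h.lt_length]

lemma minimalPeriod_trisect_base (h : IsCutPair (minimalPeriod c a) k l) :
    minimalPeriod (trisect c a k l) a = minimalPeriod c a - l := by
  rw [h.trisect_eq_bisect_bisect,
    minimalPeriod_bisect_of_not_sameCycle (not_sameCycle_bisect h.pos_right h.lt_length),
    minimalPeriod_bisect_base h.pos_right h.lt_length]

lemma minimalPeriod_trisect_of_not_sameCycle (h : IsCutPair (minimalPeriod c a) k l)
    (hx : ¬ c.SameCycle a x) : minimalPeriod (trisect c a k l) x = minimalPeriod c x := by
  rw [h.trisect_eq_bisect_bisect, minimalPeriod_bisect_of_not_sameCycle fun h' => hx ?_,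
    minimalPeriod_bisect_of_not_sameCycle hx]
  exact (sameCycle_iterate c a l).trans (sameCycle_of_bisect h')

lemma sameCycle_of_trisect (h : IsCutPair (minimalPeriod c a) k l)
    (hxy : (trisect c a k l).SameCycle x y) : c.SameCycle x y := by
  rw [h.trisect_eq_bisect_bisect] at hxy
  exact sameCycle_of_bisect (sameCycle_of_bisect hxy)

lemma not_sameCycle_trisect_left_right (h : IsCutPair (minimalPeriod c a) k l) :
    ¬ (trisect c a k l).SameCycle (c^[k] a) (c^[l] a) := by
  rw [h.trisect_eq_bisect_bisect]
  nth_rw 1 [← h.iterate_bisect]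
  exact not_sameCycle_bisect h.pos h.lt_minimalPeriod_bisect

lemma not_sameCycle_trisect_right_base (h : IsCutPair (minimalPeriod c a) k l) :
    ¬ (trisect c a k l).SameCycle (c^[l] a) a := by
  rw [h.trisect_eq_bisect_bisect]
  exact fun h' => not_sameCycle_bisect h.pos_right h.lt_length (sameCycle_of_bisect h')

lemma not_sameCycle_trisect_left_base (h : IsCutPair (minimalPeriod c a) k l) :
    ¬ (trisect c a k l).SameCycle (c^[k] a) a := by
  rw [h.trisect_eq_bisect_bisect]
  intro h'
  have hkl := sameCycle_iterate (bisect c a l) (c^[l] a) k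
  rw [h.iterate_bisect] at hkl
  exact not_sameCycle_bisect h.pos_right h.lt_length (hkl.trans (sameCycle_of_bisect h'))

end Finite

variable [Fintype α]

theorem parts_trisect (h : IsCutPair (minimalPeriod c a) k l) :
    (trisect c a k l).partition.parts = k ::ₘ (l - k) ::ₘ (minimalPeriod c a - l) ::ₘ
      c.partition.parts.erase (minimalPeriod c a) := by
  rw [h.trisect_eq_bisect_bisect, parts_bisect h.pos h.lt_minimalPeriod_bisect,
    minimalPeriod_bisect_cut h.pos_right h.lt_length, parts_bisect h.pos_right h.lt_length,
    Multiset.erase_cons_head]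

lemma numCycles_trisect (h : IsCutPair (minimalPeriod c a) k l) :
    numCycles (trisect c a k l) = numCycles c + 2 := by
  rw [h.trisect_eq_bisect_bisect, numCycles_bisect h.pos h.lt_minimalPeriod_bisect,
    numCycles_bisect h.pos_right h.lt_length]

lemma cycleWeight_trisect {M : Type*} [CommMonoid M] (h : IsCutPair (minimalPeriod c a) k l)
    (φ : ℕ → M) : cycleWeight φ (trisect c a k l)
      = φ k * φ (l - k) * φ (minimalPeriod c a - l) * cofactorWeight φ c a := by
  rw [cycleWeight, h.parts_trisect]
  simp only [Multiset.map_cons, Multiset.prod_cons, cofactorWeight, mul_assoc]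

lemma cofactorWeight_trisect {M : Type*} [CommMonoid M] (h : IsCutPair (minimalPeriod c a) k l)
    (φ : ℕ → M) : cofactorWeight φ (trisect c a k l) a
      = φ k * φ (l - k) * cofactorWeight φ c a := by
  rw [cofactorWeight, h.parts_trisect, h.minimalPeriod_trisect_base,
    Multiset.cons_swap (l - k), Multiset.cons_swap k, Multiset.erase_cons_head]
  simp only [Multiset.map_cons, Multiset.prod_cons, cofactorWeight, mul_assoc]

end IsCutPair

end Trisection

section MulThreeCycle

variable {α : Type*} [Fintype α] [DecidableEq α] {c t : Perm α} {a i j : α}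

lemma numCycles_mul_isThreeCycle_le (c : Perm α) (ht : t.IsThreeCycle) :
    numCycles (c * t) ≤ numCycles c + 2 := by
  obtain ⟨a, ha⟩ := Finset.card_pos.1 (by rw [ht.card_support]; norm_num : 0 < t.support.card)
  rw [ht.eq_swap_mul_swap_iff_mem_support.2 ha, ← mul_assoc]
  exact (numCycles_mul_swap_le _ _ _).trans (Nat.succ_le_succ (numCycles_mul_swap_le _ _ _))

lemma exists_isCutPair_of_numCycles_mul (hai : a ≠ i) (haj : a ≠ j) (hij : i ≠ j)
    (h : numCycles (c * (swap a i * swap i j)⁻¹) = numCycles c + 2) :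
    ∃ k l, IsCutPair (minimalPeriod c a) k l ∧ c^[k] a = i ∧ c^[l] a = j := by
  rw [inv_swap_mul_swap hai haj, ← mul_assoc] at h
  have hle := numCycles_mul_swap_le (c * swap a j) j i
  have hcut : c.SameCycle a j := by
    by_contra hcut
    have := numCycles_mul_swap_of_not_sameCycle hcut
    omega
  obtain ⟨l, hl, hlL, rfl⟩ := exists_iterate_eq_of_sameCycle_of_ne haj hcut
  have hcut' : (bisect c a l).SameCycle (c^[l] a) i := by
    by_contra hcut'
    have hlost := numCycles_mul_swap_of_not_sameCycle hcut'
    have := numCycles_bisect hl hlL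
    rw [bisect] at hlost this
    omega
  obtain ⟨k, hk, hkl, rfl⟩ := exists_iterate_eq_of_sameCycle_of_ne hij.symm hcut'
  rw [minimalPeriod_bisect_cut hl hlL] at hkl
  have hkl : IsCutPair (minimalPeriod c a) k l := ⟨hk, hkl, hlL⟩
  exact ⟨k, l, hkl, hkl.iterate_bisect.symm, rfl⟩

open scoped Classical in
theorem sum_isThreeCycle_eq_sum_cutPairs {M : Type*} [AddCommMonoid M] (c : Perm α) (a : α)
    (g : Perm α → M) :
    ∑ t : Perm α with t.IsThreeCycle ∧ t a ≠ a ∧ numCycles (c * t⁻¹) = numCycles c + 2,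
        g (c * t⁻¹)
      = ∑ p ∈ cutPairs (minimalPeriod c a), g (trisect c a p.1 p.2) := by
  symm
  refine Finset.sum_bij (fun p _ => swap a (c^[p.1] a) * swap (c^[p.1] a) (c^[p.2] a))
    (fun p hp => ?_) (fun p hp q hq hpq => ?_) (fun t ht => ?_) fun p _ => rfl
  · have hp := mem_cutPairs.1 hp
    refine Finset.mem_filter.2 ⟨Finset.mem_univ _, isThreeCycle_swap_mul_swap hp.iterate_ne_left
      hp.iterate_ne_right hp.iterate_ne_iterate, ?_, hp.numCycles_trisect⟩
    rw [Perm.mul_apply, swap_apply_of_ne_of_ne hp.iterate_ne_left hp.iterate_ne_right,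
      swap_apply_left]
    exact hp.iterate_ne_left.symm
  · have hp := mem_cutPairs.1 hp
    have hq := mem_cutPairs.1 hq
    have hleft : c^[p.1] a = c^[q.1] a := by
      simpa [swap_apply_of_ne_of_ne, hp.iterate_ne_left, hp.iterate_ne_right, hq.iterate_ne_left,
        hq.iterate_ne_right] using DFunLike.congr_fun hpq a
    have hright : c^[p.2] a = c^[q.2] a := by
      have := DFunLike.congr_fun hpq (c^[p.1] a)
      nth_rw 4 [hleft] at this
      simpa [swap_apply_of_ne_of_ne, hp.iterate_ne_right.symm, hq.iterate_ne_right.symm,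
        hp.iterate_ne_iterate.symm, hq.iterate_ne_iterate.symm] using this
    exact hp.eq_of_iterate_eq hq hleft hright
  · obtain ⟨-, ht, hta, hnum⟩ := Finset.mem_filter.1 ht
    have heq : t = swap a (t a) * swap (t a) (t (t a)) :=
      ht.eq_swap_mul_swap_iff_mem_support.2 (mem_support.2 hta)
    have hcube : t (t (t a)) = a := by
      have : (t ^ 3) a = a := by rw [← ht.orderOf, pow_orderOf_eq_one, Perm.one_apply]
      simpa [pow_succ] using this
    have hne : a ≠ t (t a) := fun h => hta (by rwa [← h] at hcube)
    rw [heq] at hnum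
    obtain ⟨k, l, hkl, hk, hl⟩ := exists_isCutPair_of_numCycles_mul hta.symm hne
      (fun h => hta (t.injective h).symm) hnum
    exact ⟨(k, l), mem_cutPairs.2 hkl, by rw [hk, hl, ← heq]⟩

end MulThreeCycle

section AbelConvolution

open Finset.HasAntidiagonal (antidiagonal)

/-- The Abel polynomial `x (x + b n) ^ (n - 1)` divided by `n!`. -/
noncomputable def abelPoly (b : ℝ) (n : ℕ) (x : ℝ) : ℝ :=
  match n with
  | 0 => 1
  | m + 1 => x * (x + b * (m + 1)) ^ m / (m + 1).factorial

lemma hasDerivAt_abelPoly_succ (b : ℝ) (n : ℕ) (x : ℝ) :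
    HasDerivAt (abelPoly b (n + 1)) (abelPoly b n (x + b)) x := by
  have hprod := (((hasDerivAt_id' x).mul
    (((hasDerivAt_id' x).add_const (b * ((n : ℝ) + 1))).pow n)).div_const ((n + 1).factorial : ℝ))
  refine hprod.congr_deriv ?_
  cases n with
  | zero => simp [abelPoly]
  | succ m =>
    simp only [abelPoly, Nat.factorial_succ, Nat.add_sub_cancel]
    push_cast
    field_simp
    simp only [Pi.pow_apply]
    ring

/-- Abel's identity. Both sides have the same derivative in `x` by induction, and agree at `0`. -/
theorem sum_antidiagonal_abelPoly (b : ℝ) (n : ℕ) (x y : ℝ) :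
    ∑ p ∈ antidiagonal n, abelPoly b p.1 x * abelPoly b p.2 y = abelPoly b n (x + y) := by
  induction n generalizing x with
  | zero => simp [abelPoly]
  | succ n ih =>
    let D (x : ℝ) : ℝ := abelPoly b (n + 1) y
      + ∑ p ∈ antidiagonal n, abelPoly b (p.1 + 1) x * abelPoly b p.2 y - abelPoly b (n + 1) (x + y)
    have hD (x : ℝ) : HasDerivAt D 0 x := by
      have hsum : HasDerivAt
          (fun x => ∑ p ∈ antidiagonal n, abelPoly b (p.1 + 1) x * abelPoly b p.2 y)
          (∑ p ∈ antidiagonal n, abelPoly b p.1 (x + b) * abelPoly b p.2 y) x :=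
        HasDerivAt.fun_sum fun p _ => (hasDerivAt_abelPoly_succ b p.1 x).mul_const _
      refine ((hsum.const_add _).sub
        ((hasDerivAt_abelPoly_succ b n (x + y)).comp_add_const x y)).congr_deriv ?_
      rw [ih, add_right_comm, sub_self]
    have hconst : D x = D 0 :=
      is_const_of_deriv_eq_zero (fun x => (hD x).differentiableAt) (fun x => (hD x).deriv) x 0
    have hzero : D 0 = 0 := by simp [D, abelPoly]
    rw [Finset.Nat.sum_antidiagonal_succ, ← sub_eq_zero, ← hzero, ← hconst]
    simp only [D, abelPoly, one_mul]

lemma abelPoly_pos {b x : ℝ} (hb : 0 ≤ b) (hx : 0 < x) (n : ℕ) : 0 < abelPoly b n x := by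
  cases n <;> simp only [abelPoly] <;> positivity

end AbelConvolution

section RaneyNumbers

open Finset.HasAntidiagonal (antidiagonal)

/-- The Raney number `s / (r n + s) * (r n + s).choose n`, which counts ordered forests of `s`
`r`-ary trees with `n` inner nodes in total. -/
def raney (r : ℕ) : ℕ → ℕ → ℕ
  | 0, _ => 1
  | _ + 1, 0 => 0
  | n + 1, s + 1 => raney r (n + 1) s + raney r n (s + r)
termination_by n s => (n, s)

variable (r n s : ℕ)

lemma raney_zero_left : raney r 0 s = 1 := by rw [raney]

lemma raney_succ_zero : raney r (n + 1) 0 = 0 := by rw [raney]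

lemma raney_succ_succ : raney r (n + 1) (s + 1) = raney r (n + 1) s + raney r n (s + r) := by
  rw [raney]

lemma raney_pos {r : ℕ} (hr : 0 < r) (n s : ℕ) : 0 < raney r n (s + 1) := by
  induction n generalizing s with
  | zero => simp [raney_zero_left]
  | succ n ih =>
    obtain ⟨q, rfl⟩ := Nat.exists_eq_add_of_lt hr
    rw [raney_succ_succ]
    exact Nat.add_pos_right _ (ih (s + (0 + q)))

theorem mul_raney {r : ℕ} (hr : 0 < r) (n s : ℕ) :
    (r * n + s) * raney r n s = s * (r * n + s).choose n := by
  induction n generalizing s with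
  | zero => simp [raney_zero_left]
  | succ n ihn =>
    induction s with
    | zero => simp [raney_succ_zero]
    | succ s ihs =>
      have hprev := ihn (s + r)
      set M := r * (n + 1) + s with hM
      have hMn : n < M := by nlinarith
      have habsorb := Nat.choose_succ_right_eq M n
      rw [show r * n + (s + r) = M by rw [hM]; ring] at hprev
      rw [raney_succ_succ, show r * (n + 1) + (s + 1) = M + 1 by omega, Nat.choose_succ_succ]
      zify [hMn.le] at *
      apply mul_left_cancel₀ (by omega : (M : ℤ) ≠ 0)
      linear_combination (M + 1 : ℤ) * ihs + (M + 1 : ℤ) * hprev - r * habsorb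
        - (M.choose n + M.choose (n + 1) : ℤ) * hM

theorem sum_antidiagonal_raney (x y : ℕ) :
    ∑ p ∈ antidiagonal n, raney r p.1 x * raney r p.2 y = raney r n (x + y) := by
  induction n generalizing x with
  | zero => simp [raney_zero_left]
  | succ n ihn =>
    rw [Finset.Nat.sum_antidiagonal_succ, raney_zero_left, one_mul]
    induction x with
    | zero => simp [raney_succ_zero]
    | succ x ihx =>
      simp only [raney_succ_succ, add_mul, Finset.sum_add_distrib]
      rw [ihn, ← add_assoc, ihx, add_right_comm x 1 y, raney_succ_succ, add_right_comm x r y]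

lemma succ_mul_raney_three_two : (n + 1) * raney 3 n 2 = (3 * n + 1).choose n := by
  have hraney := mul_raney (r := 3) (by norm_num) n 2
  have habsorb := Nat.choose_mul_succ_eq (3 * n + 1) n
  rw [show 3 * n + 1 + 1 - n = 2 * n + 2 by omega] at habsorb
  refine Nat.eq_of_mul_eq_mul_left (by omega : 0 < 3 * n + 2) ?_
  linear_combination (n + 1) * hraney - habsorb

end RaneyNumbers

section OddWeights

open Finset.HasAntidiagonal (antidiagonal)

/-- The weight of odd lengths `2 n + 1` given by `f n`, vanishing on even lengths. -/
def oddExtend {R : Type*} [Zero R] (f : ℕ → R) (L : ℕ) : R := if Odd L then f (L / 2) else 0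

variable {R : Type*}

lemma oddExtend_two_mul_add_one [Zero R] (f : ℕ → R) (n : ℕ) : oddExtend f (2 * n + 1) = f n := by
  rw [oddExtend, if_pos ⟨n, rfl⟩, show (2 * n + 1) / 2 = n by omega]

lemma oddExtend_of_not_odd [Zero R] (f : ℕ → R) {L : ℕ} (hL : ¬ Odd L) : oddExtend f L = 0 :=
  if_neg hL

lemma odd_of_oddExtend_ne_zero [Zero R] {f : ℕ → R} {L : ℕ} (h : oddExtend f L ≠ 0) : Odd L :=
  not_not.1 fun hL => h (oddExtend_of_not_odd f hL)

variable [CommSemiring R] (f g h : ℕ → R)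

lemma odd_of_oddExtend_mul_ne_zero {k l m : ℕ}
    (hne : oddExtend f k * oddExtend g l * oddExtend h m ≠ 0) : Odd k ∧ Odd l ∧ Odd m :=
  ⟨odd_of_oddExtend_ne_zero (left_ne_zero_of_mul (left_ne_zero_of_mul hne)),
    odd_of_oddExtend_ne_zero (right_ne_zero_of_mul (left_ne_zero_of_mul hne)),
    odd_of_oddExtend_ne_zero (right_ne_zero_of_mul hne)⟩

lemma sum_cutPairs_oddExtend_of_not_odd {L : ℕ} (hL : ¬ Odd L) :
    ∑ p ∈ cutPairs L, oddExtend f p.1 * oddExtend g (p.2 - p.1) * oddExtend h (L - p.2) = 0 := by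
  refine Finset.sum_eq_zero fun p hp => of_not_not fun hne => hL ?_
  obtain ⟨-, hkl, hlL⟩ := mem_cutPairs.1 hp
  obtain ⟨hk, hl, hm⟩ := odd_of_oddExtend_mul_ne_zero f g h hne
  have := (hk.add_odd hl).add_odd hm
  rwa [show p.1 + (p.2 - p.1) + (L - p.2) = L by omega] at this

lemma sum_cutPairs_oddExtend (n : ℕ) :
    ∑ p ∈ cutPairs (2 * n + 3),
        oddExtend f p.1 * oddExtend g (p.2 - p.1) * oddExtend h (2 * n + 3 - p.2)
      = ∑ p ∈ antidiagonal n, f p.1 * ∑ q ∈ antidiagonal p.2, g q.1 * h q.2 := by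
  simp only [Finset.mul_sum, Finset.sum_sigma', ← mul_assoc]
  symm
  refine Finset.sum_of_injOn (fun x => (2 * x.1.1 + 1, 2 * x.1.1 + 2 * x.2.1 + 2)) ?_ ?_ ?_ ?_
  · rintro ⟨⟨p, u⟩, q, r⟩ hx ⟨⟨p', u'⟩, q', r'⟩ hx' heq
    simp only [Finset.coe_sigma, Set.mem_sigma_iff, Finset.mem_coe,
      Finset.HasAntidiagonal.mem_antidiagonal, Prod.mk.injEq] at hx hx' heq
    simp only [Sigma.mk.injEq, Prod.mk.injEq, heq_eq_eq]
    omega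
  · rintro ⟨⟨p, u⟩, q, r⟩ hx
    simp only [Finset.coe_sigma, Set.mem_sigma_iff, Finset.mem_coe,
      Finset.HasAntidiagonal.mem_antidiagonal] at hx
    refine mem_cutPairs.2 ⟨?_, ?_, ?_⟩ <;> dsimp only <;> omega
  · rintro ⟨k, l⟩ hp hout
    by_contra hne
    obtain ⟨-, hkl, hlL⟩ := mem_cutPairs.1 hp
    obtain ⟨⟨i, hi⟩, ⟨j, hj⟩, ⟨m, hm⟩⟩ := odd_of_oddExtend_mul_ne_zero f g h hne
    dsimp only at hkl hlL hi hj hm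
    refine hout ⟨⟨(i, j + m), (j, m)⟩, ?_, ?_⟩
    · simp only [Finset.coe_sigma, Set.mem_sigma_iff, Finset.mem_coe,
        Finset.HasAntidiagonal.mem_antidiagonal, and_true]
      omega
    · ext <;> dsimp only <;> omega
  · rintro ⟨⟨p, u⟩, q, r⟩ hx
    simp only [Finset.mem_sigma, Finset.HasAntidiagonal.mem_antidiagonal] at hx
    dsimp only
    rw [show 2 * p + 2 * q + 2 - (2 * p + 1) = 2 * q + 1 by omega,
      show 2 * n + 3 - (2 * p + 2 * q + 2) = 2 * r + 1 by omega,
      oddExtend_two_mul_add_one, oddExtend_two_mul_add_one, oddExtend_two_mul_add_one]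

/-- The weight `(2 n + 1) ^ (n - 1) / n!` of odd lengths `2 n + 1`; multiplied by `n!` it is the
number of minimal factorizations of a cycle of that length into 3-cycles. -/
noncomputable def abelWeight : ℕ → ℝ := oddExtend fun n => abelPoly 2 n 1

lemma abelWeight_one : abelWeight 1 = 1 := oddExtend_two_mul_add_one _ 0

lemma abelWeight_ne_zero_iff {L : ℕ} : abelWeight L ≠ 0 ↔ Odd L := by
  refine ⟨odd_of_oddExtend_ne_zero, ?_⟩
  rintro ⟨n, rfl⟩
  rw [abelWeight, oddExtend_two_mul_add_one]
  exact (abelPoly_pos two_pos.le one_pos n).ne'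

lemma sum_cutPairs_abelWeight (L : ℕ) :
    ∑ p ∈ cutPairs L, abelWeight p.1 * abelWeight (p.2 - p.1) * abelWeight (L - p.2)
      = 3 / 2 * (1 - (L : ℝ)⁻¹) * abelWeight L := by
  by_cases hL : Odd L
  swap
  · simp only [abelWeight, sum_cutPairs_oddExtend_of_not_odd _ _ _ hL, oddExtend_of_not_odd _ hL,
      mul_zero]
  obtain ⟨_ | n, rfl⟩ := hL
  · simp [cutPairs_one]
  · simp only [abelWeight, show 2 * (n + 1) + 1 = 2 * n + 3 by ring, sum_cutPairs_oddExtend,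
      sum_antidiagonal_abelPoly]
    rw [show 2 * n + 3 = 2 * (n + 1) + 1 by ring, oddExtend_two_mul_add_one]
    cases n with
    | zero => norm_num [abelPoly]
    | succ m =>
      simp only [abelPoly, Nat.factorial_succ]
      push_cast
      field_simp
      ring

/-- The Raney number `raney 3 n s` as a weight of odd lengths `2 n + 1`. -/
def raneyWeight (s : ℕ) : ℕ → ℚ := oddExtend fun n => raney 3 n s

lemma raneyWeight_one_right (s : ℕ) : raneyWeight s 1 = 1 := by
  rw [raneyWeight, ← zero_add 1, ← mul_zero 2, oddExtend_two_mul_add_one, raney_zero_left,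
    Nat.cast_one]

lemma raneyWeight_succ_ne_zero (s : ℕ) {L : ℕ} (hL : Odd L) : raneyWeight (s + 1) L ≠ 0 := by
  obtain ⟨n, rfl⟩ := hL
  rw [raneyWeight, oddExtend_two_mul_add_one]
  exact_mod_cast (raney_pos three_pos n s).ne'

lemma sum_cutPairs_raneyWeight (x y z n : ℕ) :
    ∑ p ∈ cutPairs (2 * n + 3),
        raneyWeight x p.1 * raneyWeight y (p.2 - p.1) * raneyWeight z (2 * n + 3 - p.2)
      = raney 3 n (x + (y + z)) := by
  simp only [raneyWeight, sum_cutPairs_oddExtend]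
  norm_cast
  simp only [sum_antidiagonal_raney]

lemma sum_cutPairs_raneyWeight_one {L : ℕ} (hL : L ≠ 1) :
    ∑ p ∈ cutPairs L, raneyWeight 1 p.1 * raneyWeight 1 (p.2 - p.1) * raneyWeight 1 (L - p.2)
      = raneyWeight 1 L := by
  by_cases hodd : Odd L
  · obtain ⟨_ | n, rfl⟩ := hodd
    · simp at hL
    rw [show 2 * (n + 1) + 1 = 2 * n + 3 by ring, sum_cutPairs_raneyWeight,
      show 2 * n + 3 = 2 * (n + 1) + 1 by ring, raneyWeight, oddExtend_two_mul_add_one,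
      raney_succ_succ, raney_succ_zero, zero_add, zero_add]
  · simp only [raneyWeight, sum_cutPairs_oddExtend_of_not_odd _ _ _ hodd,
      oddExtend_of_not_odd _ hodd]

lemma sum_cutPairs_raneyWeight_one_one_two (L : ℕ) :
    ∑ p ∈ cutPairs L, raneyWeight 1 p.1 * raneyWeight 1 (p.2 - p.1) * raneyWeight 2 (L - p.2)
      = raneyWeight 2 L - raneyWeight 1 L := by
  by_cases hodd : Odd L
  · obtain ⟨_ | n, rfl⟩ := hodd
    · simp [cutPairs_one, raneyWeight_one_right]
    rw [show 2 * (n + 1) + 1 = 2 * n + 3 by ring, sum_cutPairs_raneyWeight,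
      show 2 * n + 3 = 2 * (n + 1) + 1 by ring, raneyWeight, raneyWeight,
      oddExtend_two_mul_add_one, oddExtend_two_mul_add_one, raney_succ_succ _ _ 1]
    push_cast
    ring
  · simp only [raneyWeight, sum_cutPairs_oddExtend_of_not_odd _ _ _ hodd,
      oddExtend_of_not_odd _ hodd, sub_zero]

end OddWeights

section Factorizations

variable {G : Type*} [Group G]

/-- The number of ways to write `c` as a product of `m` elements of `T`, in order. -/
noncomputable def numFactorizations (T : Set G) (m : ℕ) (c : G) : ℕ :=
  Nat.card {w : Fin m → G // (∀ i, w i ∈ T) ∧ (List.ofFn w).prod = c}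

lemma numFactorizations_zero_one (T : Set G) : numFactorizations T 0 1 = 1 := by
  simp [numFactorizations]

lemma prod_ofFn_snoc {m : ℕ} (w : Fin m → G) (t : G) :
    (List.ofFn (Fin.snoc (α := fun _ => G) w t)).prod = (List.ofFn w).prod * t := by
  rw [List.ofFn_succ', List.concat_eq_append, List.prod_append, List.prod_singleton]
  simp only [Fin.snoc_castSucc, Fin.snoc_last]

open scoped Classical in
lemma numFactorizations_succ [Fintype G] (T : Set G) (m : ℕ) (c : G) :
    numFactorizations T (m + 1) c = ∑ t with t ∈ T, numFactorizations T m (c * t⁻¹) := by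
  let P (t : G) (w : Fin m → G) : Prop :=
    t ∈ T ∧ (∀ i, w i ∈ T) ∧ (List.ofFn w).prod = c * t⁻¹
  have hP (p : G × (Fin m → G)) : P p.1 p.2 ↔ (∀ i, Fin.snocEquiv (fun _ => G) p i ∈ T)
      ∧ (List.ofFn (Fin.snocEquiv (fun _ => G) p)).prod = c := by
    change _ ↔ (∀ i, Fin.snoc (α := fun _ => G) p.2 p.1 i ∈ T)
      ∧ (List.ofFn (Fin.snoc (α := fun _ => G) p.2 p.1)).prod = c
    rw [prod_ofFn_snoc, Fin.forall_fin_succ']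
    simp only [Fin.snoc_castSucc, Fin.snoc_last, P, eq_mul_inv_iff_mul_eq]
    tauto
  rw [numFactorizations, ← Nat.card_congr ((Fin.snocEquiv fun _ => G).subtypeEquiv hP),
    Nat.card_congr (subtypeProdEquivSigmaSubtype P), Nat.card_sigma, Finset.sum_filter]
  refine Finset.sum_congr rfl fun t _ => ?_
  split_ifs with ht <;> simp [P, ht, numFactorizations]

end Factorizations

section ThreeCycleFactorizations

variable {α : Type*} [Fintype α] [DecidableEq α]

lemma numCycles_le_numCycles_mul_prod_add (x : Perm α) {s : List (Perm α)}
    (hs : ∀ t ∈ s, t.IsThreeCycle) : numCycles x ≤ numCycles (x * s.prod) + 2 * s.length := by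
  induction s generalizing x with
  | nil => simp
  | cons t s ih =>
    obtain ⟨ht, hs⟩ := List.forall_mem_cons.1 hs
    have hle := numCycles_mul_isThreeCycle_le (x * t) ht.inv
    have := ih (x * t) hs
    rw [mul_inv_cancel_right] at hle
    rw [List.prod_cons, List.length_cons, ← mul_assoc]
    omega

lemma card_le_numCycles_prod_add {s : List (Perm α)} (hs : ∀ t ∈ s, t.IsThreeCycle) :
    Fintype.card α ≤ numCycles s.prod + 2 * s.length := by
  simpa [numCycles_one] using numCycles_le_numCycles_mul_prod_add 1 hs

lemma numFactorizations_isThreeCycle_eq_zero {m : ℕ} {c : Perm α}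
    (h : numCycles c + 2 * m < Fintype.card α) :
    numFactorizations {t : Perm α | t.IsThreeCycle} m c = 0 := by
  rw [numFactorizations, Nat.card_eq_zero, isEmpty_subtype]
  refine .inl fun w ⟨hw, hprod⟩ => h.not_ge ?_
  simpa [hprod] using card_le_numCycles_prod_add (List.forall_mem_ofFn_iff.2 hw)

/-- A 3-cycle moves three points, so summing over the moved point counts every last factor
three times. -/
lemma three_mul_numFactorizations_succ {m : ℕ} {c : Perm α}
    (h : numCycles c + 2 * (m + 1) = Fintype.card α) :
    3 * numFactorizations {t : Perm α | t.IsThreeCycle} (m + 1) c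
      = ∑ a, ∑ p ∈ cutPairs (minimalPeriod c a),
          numFactorizations {t : Perm α | t.IsThreeCycle} m (trisect c a p.1 p.2) := by
  classical
  set N : Perm α → ℕ := numFactorizations {t : Perm α | t.IsThreeCycle} m with hN
  have hvanish (t : Perm α) (ht : t.IsThreeCycle) (hne : N (c * t⁻¹) ≠ 0) :
      numCycles (c * t⁻¹) = numCycles c + 2 := by
    have hle := numCycles_mul_isThreeCycle_le c ht.inv
    have := mt numFactorizations_isThreeCycle_eq_zero hne
    omega
  calc 3 * numFactorizations {t : Perm α | t.IsThreeCycle} (m + 1) c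
      = ∑ t : Perm α with t.IsThreeCycle, ∑ a with t a ≠ a, N (c * t⁻¹) := by
        simp only [numFactorizations_succ, Set.mem_ofPred_eq, Finset.mul_sum]
        refine Finset.sum_congr rfl fun t ht => ?_
        rw [Finset.sum_const, smul_eq_mul, ← (Finset.mem_filter.1 ht).2.card_support, ← hN]
        congr 2
    _ = ∑ a, ∑ t : Perm α with t.IsThreeCycle ∧ t a ≠ a, N (c * t⁻¹) :=
        Finset.sum_comm' (by simp)
    _ = ∑ a, ∑ t : Perm α with
          t.IsThreeCycle ∧ t a ≠ a ∧ numCycles (c * t⁻¹) = numCycles c + 2, N (c * t⁻¹) := by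
        refine Finset.sum_congr rfl fun a _ => (Finset.sum_subset ?_ ?_).symm
        · exact Finset.monotone_filter_right _ fun t _ ⟨ht, hta, _⟩ => ⟨ht, hta⟩
        · intro t ht hnot
          by_contra hne
          obtain ⟨-, ht, hta⟩ := Finset.mem_filter.1 ht
          exact hnot (Finset.mem_filter.2 ⟨Finset.mem_univ _, ht, hta, hvanish t ht hne⟩)
    _ = _ := Finset.sum_congr rfl fun a _ => sum_isThreeCycle_eq_sum_cutPairs c a N

lemma sum_inv_minimalPeriod (c : Perm α) : ∑ a, (minimalPeriod c a : ℝ)⁻¹ = numCycles c := by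
  have hcancel : ∀ L ∈ c.partition.parts, L • (L : ℝ)⁻¹ = 1 := fun L hL => by
    rw [nsmul_eq_mul, mul_inv_cancel₀ (mod_cast (c.partition.parts_pos hL).ne')]
  rw [sum_comp_minimalPeriod c fun L => (L : ℝ)⁻¹, Multiset.map_congr rfl hcancel,
    Multiset.map_const', Multiset.sum_replicate, nsmul_one, numCycles]

lemma HasOddCycles.exists_numCycles_add_two_mul {c : Perm α} (hc : HasOddCycles c) :
    ∃ m, numCycles c + 2 * m = Fintype.card α := by
  have hexists (s : Multiset ℕ) (hs : ∀ L ∈ s, Odd L) : ∃ m, s.card + 2 * m = s.sum := by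
    induction s using Multiset.induction_on with
    | empty => exact ⟨0, rfl⟩
    | cons L s ih =>
      obtain ⟨⟨n, rfl⟩, hodd⟩ := Multiset.forall_mem_cons.1 hs
      obtain ⟨m, hm⟩ := ih hodd
      exact ⟨n + m, by rw [Multiset.card_cons, Multiset.sum_cons, ← hm]; ring⟩
  obtain ⟨m, hm⟩ := hexists _ hc
  exact ⟨m, hm.trans c.partition.parts_sum⟩

theorem numFactorizations_isThreeCycle {m : ℕ} {c : Perm α}
    (h : numCycles c + 2 * m = Fintype.card α) :
    (numFactorizations {t : Perm α | t.IsThreeCycle} m c : ℝ)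
      = m.factorial * cycleWeight abelWeight c := by
  induction m generalizing c with
  | zero =>
    obtain rfl := eq_one_of_numCycles_eq_card h
    simp [numFactorizations_zero_one, cycleWeight, parts_partition, abelWeight_one]
  | succ m ih =>
    have hstep : (3 : ℝ) * numFactorizations {t : Perm α | t.IsThreeCycle} (m + 1) c
        = 3 / 2 * m.factorial * cycleWeight abelWeight c * (Fintype.card α - numCycles c) :=
      calc (3 : ℝ) * numFactorizations {t : Perm α | t.IsThreeCycle} (m + 1) c
          = ∑ a, ∑ p ∈ cutPairs (minimalPeriod c a),
              m.factorial * cycleWeight abelWeight (trisect c a p.1 p.2) := by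
            rw [← Nat.cast_ofNat, ← Nat.cast_mul, three_mul_numFactorizations_succ h]
            push_cast
            refine Finset.sum_congr rfl fun a _ => Finset.sum_congr rfl fun p hp => ih ?_
            rw [(mem_cutPairs.1 hp).numCycles_trisect, ← h]
            ring
        _ = ∑ a, 3 / 2 * m.factorial * cycleWeight abelWeight c
              * (1 - (minimalPeriod c a : ℝ)⁻¹) := by
            refine Finset.sum_congr rfl fun a _ => ?_
            rw [Finset.sum_congr rfl fun p hp => by
                rw [(mem_cutPairs.1 hp).cycleWeight_trisect],
              ← Finset.mul_sum, ← Finset.sum_mul, sum_cutPairs_abelWeight,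
              cycleWeight_eq_mul_cofactorWeight abelWeight c a]
            ring
        _ = 3 / 2 * m.factorial * cycleWeight abelWeight c * (Fintype.card α - numCycles c) := by
            simp [← Finset.mul_sum, sum_inv_minimalPeriod]
    rw [← h] at hstep
    push_cast [Nat.factorial_succ] at hstep ⊢
    linarith

lemma cycleWeight_abelWeight_ne_zero_iff {c : Perm α} :
    cycleWeight abelWeight c ≠ 0 ↔ HasOddCycles c := by
  rw [cycleWeight, Ne, Multiset.prod_eq_zero_iff]
  simp only [Multiset.mem_map, not_exists, not_and, HasOddCycles, ← abelWeight_ne_zero_iff, Ne]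

lemma hasOddCycles_prod_of_length {s : List (Perm α)} (hs : ∀ t ∈ s, t.IsThreeCycle)
    (hlen : numCycles s.prod + 2 * s.length = Fintype.card α) : HasOddCycles s.prod := by
  rw [← cycleWeight_abelWeight_ne_zero_iff]
  refine right_ne_zero_of_mul (a := (s.length.factorial : ℝ)) ?_
  rw [← numFactorizations_isThreeCycle hlen, Nat.cast_ne_zero, numFactorizations, Nat.card_ne_zero]
  exact ⟨⟨s.get, fun i => hs _ (s.get_mem i), by rw [List.ofFn_get]⟩, inferInstance⟩

lemma HasOddCycles.exists_list_isThreeCycle {c : Perm α} (hc : HasOddCycles c) :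
    ∃ s : List (Perm α), (∀ t ∈ s, t.IsThreeCycle) ∧ s.prod = c
      ∧ numCycles c + 2 * s.length = Fintype.card α := by
  obtain ⟨m, hm⟩ := hc.exists_numCycles_add_two_mul
  have hne : numFactorizations {t : Perm α | t.IsThreeCycle} m c ≠ 0 := by
    rw [← Nat.cast_ne_zero (R := ℝ), numFactorizations_isThreeCycle hm]
    exact mul_ne_zero (mod_cast m.factorial_ne_zero) (cycleWeight_abelWeight_ne_zero_iff.2 hc)
  obtain ⟨⟨w, hw, hprod⟩⟩ := (Nat.card_ne_zero.1 hne).1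
  exact ⟨List.ofFn w, List.forall_mem_ofFn_iff.2 hw, hprod, by rwa [List.length_ofFn]⟩

end ThreeCycleFactorizations

section OddPrefixes

lemma isCutPair_one_two {α : Type*} [Finite α] {x : Perm α} {a : α} (hne : x a ≠ a)
    (hne' : x (x a) ≠ a) : IsCutPair (minimalPeriod x a) 1 2 := by
  have hpos := minimalPeriod_perm_pos x a
  have hone : minimalPeriod x a ≠ 1 := mt Function.minimalPeriod_eq_one_iff_isFixedPt.1 hne
  have htwo : minimalPeriod x a ≠ 2 := fun h => hne' (h ▸ Function.iterate_minimalPeriod :)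
  exact ⟨one_pos, one_lt_two, by omega⟩

variable {α : Type*} [DecidableEq α] {c x : Perm α} {a b : α} {k l : ℕ}

lemma IsCutPair.trisect_apply_left (h : IsCutPair (minimalPeriod c a) k l) :
    trisect c a k l (c^[k] a) = c a := by
  simp [trisect, swap_apply_of_ne_of_ne, h.iterate_ne_left, h.iterate_ne_right]

lemma IsCutPair.trisect_apply_right (h : IsCutPair (minimalPeriod c a) k l) :
    trisect c a k l (c^[l] a) = c (c^[k] a) := by
  simp [trisect, swap_apply_of_ne_of_ne, h.iterate_ne_right.symm, h.iterate_ne_iterate.symm]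

lemma trisect_apply_of_not_sameCycle (hb : ¬ c.SameCycle a b) : trisect c a k l b = c b := by
  have hne (m : ℕ) : b ≠ c^[m] a := fun h => hb (h ▸ sameCycle_iterate c a m)
  rw [trisect, mul_inv_rev, swap_inv, swap_inv, Perm.mul_apply, Perm.mul_apply,
    swap_apply_of_ne_of_ne (show b ≠ a from hne 0) (hne k),
    swap_apply_of_ne_of_ne (hne k) (hne l)]

lemma inv_mul_trisect (hleft : x (c^[k] a) = c a) (hright : x (c^[l] a) = c (c^[k] a)) :
    x⁻¹ * trisect c a k l = trisect (x⁻¹ * c) a 1 2 := by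
  have hone : (x⁻¹ * c) a = c^[k] a := inv_eq_iff_eq.2 hleft.symm
  have htwo : (x⁻¹ * c) (c^[k] a) = c^[l] a := inv_eq_iff_eq.2 hright.symm
  rw [trisect, trisect, Function.iterate_one, Function.iterate_succ_apply, Function.iterate_one,
    hone, htwo, mul_assoc]

variable [Fintype α]

lemma IsCutPair.hasOddCycles_trisect_one_two (h : IsCutPair (minimalPeriod c a) 1 2) :
    HasOddCycles (trisect c a 1 2) ↔ HasOddCycles c := by
  have hlt := h.lt_length
  have hodd : Odd (minimalPeriod c a - 2) ↔ Odd (minimalPeriod c a) := by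
    rw [Nat.odd_iff, Nat.odd_iff]
    omega
  rw [HasOddCycles, HasOddCycles, h.parts_trisect,
    ← Multiset.cons_erase (minimalPeriod_mem_parts c a)]
  simp only [Multiset.forall_mem_cons, Multiset.erase_cons_head, hodd]
  simp

/-- A length-free description of the interval `[1, c]` of the prefix order with respect to
3-cycles, for `c` with odd cycles: `x` and `x⁻¹ c` have odd cycles and their lengths
`(card α - numCycles) / 2` add up to that of `c`. -/
structure IsOddPrefix (c x : Perm α) : Prop where
  odd_left : HasOddCycles x
  odd_right : HasOddCycles (x⁻¹ * c)
  numCycles_add : numCycles x + numCycles (x⁻¹ * c) = Fintype.card α + numCycles c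

lemma numCycles_add_numCycles_le (hx : HasOddCycles x) (hxc : HasOddCycles (x⁻¹ * c)) :
    numCycles x + numCycles (x⁻¹ * c) ≤ Fintype.card α + numCycles c := by
  obtain ⟨s, hs, hsx, hscard⟩ := hx.exists_list_isThreeCycle
  obtain ⟨s', hs', hsxc, hscard'⟩ := hxc.exists_list_isThreeCycle
  have h := card_le_numCycles_prod_add (List.forall_mem_append.2 ⟨hs, hs'⟩)
  rw [List.prod_append, hsx, hsxc, mul_inv_cancel_left, List.length_append] at h
  omega

lemma IsCutPair.isOddPrefix_trisect_iff (h : IsCutPair (minimalPeriod c a) k l)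
    (hleft : x (c^[k] a) = c a) (hright : x (c^[l] a) = c (c^[k] a)) :
    IsOddPrefix (trisect c a k l) x ↔ IsOddPrefix c x := by
  have hone : (x⁻¹ * c) a = c^[k] a := inv_eq_iff_eq.2 hleft.symm
  have htwo : (x⁻¹ * c) (c^[k] a) = c^[l] a := inv_eq_iff_eq.2 hright.symm
  have hcut : IsCutPair (minimalPeriod (x⁻¹ * c : Perm α) a) 1 2 :=
    isCutPair_one_two (hone ▸ h.iterate_ne_left.symm) (by
      rw [hone, htwo]
      exact h.iterate_ne_right.symm)
  have hinv := inv_mul_trisect hleft hright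
  constructor
  · rintro ⟨hx, hxc, hadd⟩
    rw [hinv] at hxc hadd
    rw [hcut.numCycles_trisect, h.numCycles_trisect] at hadd
    exact ⟨hx, hcut.hasOddCycles_trisect_one_two.1 hxc, by omega⟩
  · rintro ⟨hx, hxc, hadd⟩
    refine ⟨hx, hinv ▸ hcut.hasOddCycles_trisect_one_two.2 hxc, ?_⟩
    rw [hinv, hcut.numCycles_trisect, h.numCycles_trisect]
    omega

lemma IsOddPrefix.exists_isCutPair (h : IsOddPrefix c x) (ha : x a ≠ c a) :
    ∃ k l, IsCutPair (minimalPeriod c a) k l ∧ x (c^[k] a) = c a ∧ x (c^[l] a) = c (c^[k] a) := by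
  obtain ⟨hx, hxc, hadd⟩ := h
  set y := x⁻¹ * c
  have hxy (b : α) : x (y b) = c b := (inv_eq_iff_eq.1 rfl).symm
  have hya : y a ≠ a := fun h => ha (by rw [← hxy, h])
  have hyya : y (y a) ≠ a := by
    intro h
    have hle : minimalPeriod y a ≤ 2 := Function.IsPeriodicPt.minimalPeriod_le two_pos h
    have hone : minimalPeriod y a ≠ 1 := mt Function.minimalPeriod_eq_one_iff_isFixedPt.1 hya
    obtain ⟨n, hn⟩ := hxc _ (minimalPeriod_mem_parts y a)
    omega
  have hcut := isCutPair_one_two hya hyya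
  have hodd := hcut.hasOddCycles_trisect_one_two.2 hxc
  have hnum := hcut.numCycles_trisect
  have htri : trisect y a 1 2 = x⁻¹ * (c * (swap a (y a) * swap (y a) (y (y a)))⁻¹) :=
    mul_assoc _ _ _
  rw [htri] at hodd hnum
  have hne : y a ≠ y (y a) := fun h => hya (y.injective h).symm
  have hle := numCycles_mul_isThreeCycle_le c
    (isThreeCycle_swap_mul_swap hya.symm hyya.symm hne).inv
  have hge := numCycles_add_numCycles_le hx hodd
  obtain ⟨k, l, hkl, hk, hl⟩ := exists_isCutPair_of_numCycles_mul hya.symm hyya.symm hne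
    (show numCycles (c * _) = numCycles c + 2 by omega)
  exact ⟨k, l, hkl, by rw [hk, hxy], by rw [hl, hk, hxy]⟩

lemma IsOddPrefix.complement (h : IsOddPrefix c x) : IsOddPrefix c (x⁻¹ * c) := by
  obtain ⟨hx, hxc, hadd⟩ := h
  have hpart : ((x⁻¹ * c)⁻¹ * c).partition = x.partition := by
    rw [mul_inv_rev, inv_inv, mul_assoc, partition_mul_comm, mul_inv_cancel_right]
  refine ⟨hxc, ?_, ?_⟩
  · rwa [HasOddCycles, hpart]
  · rwa [numCycles.eq_1 ((x⁻¹ * c)⁻¹ * c), hpart, add_comm]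

lemma IsOddPrefix.complement' (h : IsOddPrefix c x) : IsOddPrefix c (c * x⁻¹) := by
  obtain ⟨hx, hxc, hadd⟩ := h
  have hinv : (c * x⁻¹)⁻¹ * c = x := by group
  refine ⟨?_, by rwa [hinv], ?_⟩
  · rwa [HasOddCycles, partition_mul_comm]
  · rwa [hinv, numCycles_mul_comm, add_comm]

lemma isOddPrefix_one_iff : IsOddPrefix 1 x ↔ x = 1 := by
  constructor
  · rintro ⟨-, -, hadd⟩
    have := numCycles_le_card x
    rw [mul_one, numCycles_inv, numCycles_one] at hadd
    exact eq_one_of_numCycles_eq_card (by omega)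
  · rintro rfl
    have hodd : HasOddCycles (1 : Perm α) := by
      simp only [HasOddCycles, parts_partition, cycleType_one, support_one, Finset.card_empty,
        zero_add, tsub_zero]
      exact fun m hm => Multiset.eq_of_mem_replicate hm ▸ odd_one
    exact ⟨hodd, by simpa using hodd, by simp [numCycles_one]⟩

end OddPrefixes

section MarkedPrefixes

variable {α : Type*} [Fintype α] [DecidableEq α] {c x : Perm α} {a : α} {k l : ℕ}
  {S D : Finset α}

open scoped Classical in
/-- The odd prefixes of `c` that fix every point of `S` and agree with `c` on `D`. -/
noncomputable def markedPrefixes (c : Perm α) (S D : Finset α) : Finset (Perm α) :=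
  {x | IsOddPrefix c x ∧ (∀ s ∈ S, x s = s) ∧ ∀ d ∈ D, x d = c d}

lemma mem_markedPrefixes :
    x ∈ markedPrefixes c S D ↔ IsOddPrefix c x ∧ (∀ s ∈ S, x s = s) ∧ ∀ d ∈ D, x d = c d := by
  simp [markedPrefixes]

lemma markedPrefixes_one (S D : Finset α) : markedPrefixes 1 S D = {1} := by
  ext x
  simp only [mem_markedPrefixes, isOddPrefix_one_iff, Finset.mem_singleton, and_iff_left_iff_imp]
  rintro rfl
  exact ⟨fun _ _ => rfl, fun _ _ => rfl⟩

lemma card_markedPrefixes_dual (c : Perm α) (S D : Finset α) :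
    (markedPrefixes c (D.image c) S).card = (markedPrefixes c S D).card := by
  refine Finset.card_nbij' (fun x => x⁻¹ * c) (fun x => c * x⁻¹) ?_ ?_
    (fun x _ => by simp) (fun x _ => by simp)
  · intro x hx
    obtain ⟨hpre, hD, hS⟩ := mem_markedPrefixes.1 hx
    exact mem_markedPrefixes.2 ⟨hpre.complement,
      fun s hs => inv_eq_iff_eq.2 (hS s hs).symm,
      fun d hd => inv_eq_iff_eq.2 (hD _ (Finset.mem_image_of_mem c hd)).symm⟩
  · intro x hx
    obtain ⟨hpre, hS, hD⟩ := mem_markedPrefixes.1 hx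
    refine mem_markedPrefixes.2 ⟨hpre.complement', Finset.forall_mem_image.2 fun d hd => ?_,
      fun s hs => congrArg c (inv_eq_iff_eq.2 (hS s hs).symm)⟩
    exact congrArg c (inv_eq_iff_eq.2 (hD d hd).symm)

lemma card_markedPrefixes_eq_add (c : Perm α) (a : α) (S D : Finset α) :
    (markedPrefixes c S D).card = (markedPrefixes c S (insert a D)).card
      + ((markedPrefixes c S D).filter fun x => x a ≠ c a).card := by
  rw [← Finset.card_filter_add_card_filter_not (s := markedPrefixes c S D) fun x => x a = c a]
  congr 2
  ext x
  simp only [Finset.mem_filter, mem_markedPrefixes, Finset.forall_mem_insert]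
  tauto

lemma IsCutPair.mem_markedPrefixes_trisect_iff (h : IsCutPair (minimalPeriod c a) k l)
    (S : Finset α) (hD : ∀ d ∈ D, ¬ c.SameCycle a d) :
    x ∈ markedPrefixes (trisect c a k l) S (insert (c^[k] a) (insert (c^[l] a) D))
      ↔ x ∈ markedPrefixes c S D ∧ x (c^[k] a) = c a ∧ x (c^[l] a) = c (c^[k] a) := by
  have hagree : (∀ d ∈ D, x d = trisect c a k l d) ↔ ∀ d ∈ D, x d = c d :=
    forall₂_congr fun d hd => by rw [trisect_apply_of_not_sameCycle (hD d hd)]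
  simp only [mem_markedPrefixes, Finset.forall_mem_insert, h.trisect_apply_left,
    h.trisect_apply_right, hagree]
  constructor
  · rintro ⟨hpre, hS, hleft, hright, hD⟩
    exact ⟨⟨(h.isOddPrefix_trisect_iff hleft hright).1 hpre, hS, hD⟩, hleft, hright⟩
  · rintro ⟨⟨hpre, hS, hD⟩, hleft, hright⟩
    exact ⟨(h.isOddPrefix_trisect_iff hleft hright).2 hpre, hS, hleft, hright, hD⟩

/-- The 3-cycle `a → x⁻¹ c a → (x⁻¹ c)² a → a` can be split off `x⁻¹ c`. -/
lemma card_filter_markedPrefixes (S : Finset α) (hD : ∀ d ∈ D, ¬ c.SameCycle a d) :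
    ((markedPrefixes c S D).filter fun x => x a ≠ c a).card
      = ∑ p ∈ cutPairs (minimalPeriod c a), (markedPrefixes (trisect c a p.1 p.2) S
          (insert (c^[p.1] a) (insert (c^[p.2] a) D))).card := by
  rw [← Finset.card_biUnion]
  · congr 1
    ext x
    rw [Finset.mem_filter, Finset.mem_biUnion]
    constructor
    · rintro ⟨hx, hxa⟩
      obtain ⟨k, l, hcut, hleft, hright⟩ := (mem_markedPrefixes.1 hx).1.exists_isCutPair hxa
      exact ⟨(k, l), mem_cutPairs.2 hcut,
        (hcut.mem_markedPrefixes_trisect_iff S hD).2 ⟨hx, hleft, hright⟩⟩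
    · rintro ⟨p, hp, hx⟩
      have hp := mem_cutPairs.1 hp
      obtain ⟨hx, hleft, -⟩ := (hp.mem_markedPrefixes_trisect_iff S hD).1 hx
      exact ⟨hx, fun hxa => hp.iterate_ne_left (x.injective (hxa.trans hleft.symm))⟩
  · intro p hp q hq hpq
    have hp := mem_cutPairs.1 hp
    have hq := mem_cutPairs.1 hq
    refine Finset.disjoint_left.2 fun x hxp hxq => hpq ?_
    obtain ⟨-, hleft, hright⟩ := (hp.mem_markedPrefixes_trisect_iff S hD).1 hxp
    obtain ⟨-, hleft', hright'⟩ := (hq.mem_markedPrefixes_trisect_iff S hD).1 hxq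
    have heq := x.injective (hleft.trans hleft'.symm)
    exact hp.eq_of_iterate_eq hq heq (x.injective (by rw [hright, hright', heq]))

end MarkedPrefixes

section MarkedWeights

variable {α : Type*} [Fintype α] [DecidableEq α] {c : Perm α} {a : α} {k l : ℕ} {M : Finset α}

/-- The factor by which a mark on a cycle of length `L` changes its number of odd prefixes. -/
def markRatio (L : ℕ) : ℚ := raneyWeight 1 L / raneyWeight 2 L

lemma raneyWeight_two_mul_markRatio (L : ℕ) :
    raneyWeight 2 L * markRatio L = raneyWeight 1 L := by
  by_cases hL : Odd L
  · exact mul_div_cancel₀ _ (raneyWeight_succ_ne_zero 1 hL)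
  · simp only [raneyWeight, oddExtend_of_not_odd _ hL, zero_mul]

/-- The number of odd prefixes of `c` subject to one condition on each cycle that meets `M`: a
cycle of length `2 n + 1` contributes `raney 3 n 1` if it is marked and `raney 3 n 2` if not. -/
noncomputable def markedWeight (c : Perm α) (M : Finset α) : ℚ :=
  cycleWeight (raneyWeight 2) c * ∏ m ∈ M, markRatio (minimalPeriod c m)

/-- `markedWeight c M` without the contribution of the cycle through `a`. -/
noncomputable def markedCofactor (c : Perm α) (a : α) (M : Finset α) : ℚ :=
  cofactorWeight (raneyWeight 2) c a * ∏ m ∈ M, markRatio (minimalPeriod c m)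

lemma markedWeight_one (M : Finset α) : markedWeight 1 M = 1 := by
  simp [markedWeight, markRatio, cycleWeight, parts_partition, raneyWeight_one_right]

lemma markedWeight_eq_mul_markedCofactor (c : Perm α) (a : α) (M : Finset α) :
    markedWeight c M = raneyWeight 2 (minimalPeriod c a) * markedCofactor c a M := by
  rw [markedWeight, markedCofactor, cycleWeight_eq_mul_cofactorWeight _ c a, mul_assoc]

lemma markedWeight_insert (c : Perm α) (ha : a ∉ M) :
    markedWeight c (insert a M) = raneyWeight 1 (minimalPeriod c a) * markedCofactor c a M := by
  rw [markedWeight, markedCofactor, cycleWeight_eq_mul_cofactorWeight _ c a,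
    Finset.prod_insert ha, ← raneyWeight_two_mul_markRatio]
  ring

lemma markedCofactor_trisect (h : IsCutPair (minimalPeriod c a) k l)
    (hM : ∀ m ∈ M, ¬ c.SameCycle a m) :
    markedCofactor (trisect c a k l) a (insert (c^[k] a) (insert (c^[l] a) M))
      = raneyWeight 1 k * raneyWeight 1 (l - k) * markedCofactor c a M := by
  have hright : c^[l] a ∉ M := fun hmem => hM _ hmem (sameCycle_iterate c a l)
  have hleft : c^[k] a ∉ insert (c^[l] a) M := by
    rw [Finset.mem_insert, not_or]
    exact ⟨h.iterate_ne_iterate, fun hmem => hM _ hmem (sameCycle_iterate c a k)⟩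
  rw [markedCofactor, Finset.prod_insert hleft, Finset.prod_insert hright, h.cofactorWeight_trisect,
    h.minimalPeriod_trisect_left, h.minimalPeriod_trisect_right, Finset.prod_congr rfl fun m hm =>
      by rw [h.minimalPeriod_trisect_of_not_sameCycle (hM m hm)],
    ← raneyWeight_two_mul_markRatio k, ← raneyWeight_two_mul_markRatio (l - k), markedCofactor]
  ring

lemma sum_cutPairs_markedWeight_trisect (hM : ∀ m ∈ M, ¬ c.SameCycle a m) :
    ∑ p ∈ cutPairs (minimalPeriod c a),
        markedWeight (trisect c a p.1 p.2) (insert (c^[p.1] a) (insert (c^[p.2] a) M))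
      = markedWeight c M - markedWeight c (insert a M) := by
  have ha : a ∉ M := fun hmem => hM a hmem (SameCycle.refl _ _)
  have hterm : ∀ p ∈ cutPairs (minimalPeriod c a),
      markedWeight (trisect c a p.1 p.2) (insert (c^[p.1] a) (insert (c^[p.2] a) M))
        = raneyWeight 1 p.1 * raneyWeight 1 (p.2 - p.1) * raneyWeight 2 (minimalPeriod c a - p.2)
          * markedCofactor c a M := fun p hp => by
    have hcut := mem_cutPairs.1 hp
    rw [markedWeight_eq_mul_markedCofactor _ a, markedCofactor_trisect hcut hM,
      hcut.minimalPeriod_trisect_base]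
    ring
  rw [Finset.sum_congr rfl hterm, ← Finset.sum_mul, sum_cutPairs_raneyWeight_one_one_two,
    markedWeight_eq_mul_markedCofactor c a, markedWeight_insert c ha, sub_mul]

lemma sum_cutPairs_markedWeight_trisect_insert (hca : c a ≠ a) (hM : ∀ m ∈ M, ¬ c.SameCycle a m) :
    ∑ p ∈ cutPairs (minimalPeriod c a),
        markedWeight (trisect c a p.1 p.2) (insert a (insert (c^[p.1] a) (insert (c^[p.2] a) M)))
      = markedWeight c (insert a M) := by
  have ha : a ∉ M := fun hmem => hM a hmem (SameCycle.refl _ _)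
  have hterm : ∀ p ∈ cutPairs (minimalPeriod c a),
      markedWeight (trisect c a p.1 p.2) (insert a (insert (c^[p.1] a) (insert (c^[p.2] a) M)))
        = raneyWeight 1 p.1 * raneyWeight 1 (p.2 - p.1) * raneyWeight 1 (minimalPeriod c a - p.2)
          * markedCofactor c a M := fun p hp => by
    have hcut := mem_cutPairs.1 hp
    rw [markedWeight_insert _ (by simp [hcut.iterate_ne_left, hcut.iterate_ne_right, ha]),
      markedCofactor_trisect hcut hM, hcut.minimalPeriod_trisect_base]
    ring
  rw [Finset.sum_congr rfl hterm, ← Finset.sum_mul, sum_cutPairs_raneyWeight_one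
    (mt Function.minimalPeriod_eq_one_iff_isFixedPt.1 hca), markedWeight_insert c ha]

end MarkedWeights

section SeparatedMarks

variable {α : Type*} [DecidableEq α] {c : Perm α} {a : α} {k l : ℕ} {S D : Finset α}

/-- The marks in `S` and in `D` lie on pairwise different cycles of `c`. -/
structure SeparatedMarks (c : Perm α) (S D : Finset α) : Prop where
  not_sameCycle : ∀ x ∈ S ∪ D, ∀ y ∈ S ∪ D, x ≠ y → ¬ c.SameCycle x y
  disjoint : Disjoint S D

namespace SeparatedMarks

lemma empty (c : Perm α) : SeparatedMarks c ∅ ∅ := ⟨by simp, Finset.disjoint_empty_left ∅⟩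

lemma insert_right (h : SeparatedMarks c S D) (ha : ∀ m ∈ S ∪ D, ¬ c.SameCycle a m) :
    SeparatedMarks c S (insert a D) := by
  refine ⟨fun x hx y hy hxy => ?_, Finset.disjoint_insert_right.2
    ⟨fun haS => ha a (Finset.mem_union_left D haS) (.refl _ _), h.disjoint⟩⟩
  rw [Finset.union_insert, Finset.mem_insert] at hx hy
  rcases hx with rfl | hx <;> rcases hy with rfl | hy
  · exact absurd rfl hxy
  · exact ha y hy
  · exact fun hsame => ha x hx hsame.symm
  · exact h.not_sameCycle x hx y hy hxy

lemma trisect_insert [Finite α] (h : SeparatedMarks c S D)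
    (hcut : IsCutPair (minimalPeriod c a) k l) (hM : ∀ m ∈ S ∪ D, m ≠ a → ¬ c.SameCycle a m) :
    SeparatedMarks (trisect c a k l) S (insert (c^[k] a) (insert (c^[l] a) D)) := by
  have hiterate (i : ℕ) {m : α} (hm : m ∈ S ∪ D) (hma : m ≠ a) :
      ¬ (trisect c a k l).SameCycle (c^[i] a) m := fun hsame =>
    hM m hm hma ((sameCycle_iterate c a i).trans (hcut.sameCycle_of_trisect hsame))
  have hold : SeparatedMarks (trisect c a k l) S D :=
    ⟨fun x hx y hy hxy hsame => h.not_sameCycle x hx y hy hxy (hcut.sameCycle_of_trisect hsame),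
      h.disjoint⟩
  refine (hold.insert_right fun m hm => ?_).insert_right fun m hm => ?_
  · rcases eq_or_ne m a with rfl | hma
    · exact hcut.not_sameCycle_trisect_right_base
    · exact hiterate l hm hma
  · rw [Finset.union_insert, Finset.mem_insert] at hm
    rcases hm with rfl | hm
    · exact hcut.not_sameCycle_trisect_left_right
    · rcases eq_or_ne m a with rfl | hma
      · exact hcut.not_sameCycle_trisect_left_base
      · exact hiterate k hm hma

lemma dual (h : SeparatedMarks c S D) : SeparatedMarks c (D.image c) S := by
  have hcross {d s : α} (hd : d ∈ D) (hs : s ∈ S) : ¬ c.SameCycle d s :=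
    h.not_sameCycle d (Finset.mem_union_right S hd) s (Finset.mem_union_left D hs)
      (Finset.disjoint_right.1 h.disjoint hd <| · ▸ hs)
  refine ⟨fun x hx y hy hxy hsame => ?_, Finset.disjoint_left.2 fun x hx hxS => ?_⟩
  · rw [Finset.mem_union, Finset.mem_image] at hx hy
    rcases hx with ⟨d, hd, rfl⟩ | hx <;> rcases hy with ⟨e, he, rfl⟩ | hy
    · exact h.not_sameCycle d (Finset.mem_union_right S hd) e (Finset.mem_union_right S he)
        (ne_of_apply_ne c hxy) (sameCycle_apply_right.1 (sameCycle_apply_left.1 hsame))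
    · exact hcross hd hy (sameCycle_apply_left.1 hsame)
    · exact hcross he hx (sameCycle_apply_right.1 hsame).symm
    · exact h.not_sameCycle x (Finset.mem_union_left D hx) y (Finset.mem_union_left D hy) hxy hsame
  · obtain ⟨d, hd, rfl⟩ := Finset.mem_image.1 hx
    exact hcross hd hxS (sameCycle_apply_right.2 (.refl _ _))

end SeparatedMarks

lemma markedWeight_dual [Fintype α] (h : SeparatedMarks c S D) :
    markedWeight c (D.image c ∪ S) = markedWeight c (S ∪ D) := by
  have hperiod (d : α) : minimalPeriod c (c d) = minimalPeriod c d := minimalPeriod_iterate c d 1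
  simp only [markedWeight, Finset.prod_union h.dual.disjoint, Finset.prod_union h.disjoint,
    Finset.prod_image c.injective.injOn, hperiod, mul_comm (∏ _ ∈ D, _)]

end SeparatedMarks

section PrefixCount

variable {α : Type*} [Fintype α] [DecidableEq α] {c : Perm α} {a : α} {S D : Finset α}

/-- The odd prefixes of `c` with separated marks are counted by `markedWeight`; shown for all `c`
by induction on the number of cycles, from many to few. -/
def PrefixCountFormula (c : Perm α) : Prop :=
  ∀ S D : Finset α, SeparatedMarks c S D →
    ((markedPrefixes c S D).card : ℚ) = markedWeight c (S ∪ D)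

lemma card_filter_markedPrefixes_eq_sum_markedWeight
    (ih : ∀ d : Perm α, numCycles c < numCycles d → PrefixCountFormula d)
    (hsep : SeparatedMarks c S D) (hM : ∀ m ∈ S ∪ D, m ≠ a → ¬ c.SameCycle a m) (ha : a ∉ D) :
    (((markedPrefixes c S D).filter fun x => x a ≠ c a).card : ℚ)
      = ∑ p ∈ cutPairs (minimalPeriod c a), markedWeight (trisect c a p.1 p.2)
          (insert (c^[p.1] a) (insert (c^[p.2] a) (S ∪ D))) := by
  rw [card_filter_markedPrefixes S fun d hd =>
    hM d (Finset.mem_union_right S hd) (ne_of_mem_of_not_mem hd ha), Nat.cast_sum]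
  refine Finset.sum_congr rfl fun p hp => ?_
  have hcut := mem_cutPairs.1 hp
  rw [ih _ (by rw [hcut.numCycles_trisect]; omega) _ _ (hsep.trisect_insert hcut hM),
    Finset.union_insert, Finset.union_insert]

lemma card_markedPrefixes_of_mem_left
    (ih : ∀ d : Perm α, numCycles c < numCycles d → PrefixCountFormula d)
    (hsep : SeparatedMarks c S D) (ha : a ∈ S) (hca : c a ≠ a) :
    ((markedPrefixes c S D).card : ℚ) = markedWeight c (S ∪ D) := by
  have haM : a ∈ S ∪ D := Finset.mem_union_left D ha
  have hM : ∀ m ∈ S ∪ D, m ≠ a → ¬ c.SameCycle a m := fun m hm hma =>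
    hsep.not_sameCycle a haM m hm hma.symm
  have hfilter : (markedPrefixes c S D).filter (fun x => x a ≠ c a) = markedPrefixes c S D :=
    Finset.filter_true_of_mem fun x hx => by
      rw [(mem_markedPrefixes.1 hx).2.1 a ha]
      exact hca.symm
  rw [← hfilter, card_filter_markedPrefixes_eq_sum_markedWeight ih hsep hM
    (Finset.disjoint_left.1 hsep.disjoint ha), ← Finset.insert_erase haM,
    ← sum_cutPairs_markedWeight_trisect_insert hca fun m hm =>
      hM m (Finset.mem_of_mem_erase hm) (Finset.ne_of_mem_erase hm)]
  refine Finset.sum_congr rfl fun p _ => ?_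
  rw [Finset.insert_comm (c^[p.2] a) a, Finset.insert_comm (c^[p.1] a) a]

lemma card_markedPrefixes_of_mem_right
    (ih : ∀ d : Perm α, numCycles c < numCycles d → PrefixCountFormula d)
    (hsep : SeparatedMarks c S D) (ha : a ∈ D) (hca : c a ≠ a) :
    ((markedPrefixes c S D).card : ℚ) = markedWeight c (S ∪ D) := by
  rw [← card_markedPrefixes_dual, ← markedWeight_dual hsep]
  exact card_markedPrefixes_of_mem_left ih hsep.dual (Finset.mem_image_of_mem c ha)
    (c.injective.ne hca)

lemma card_markedPrefixes_of_notMem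
    (ih : ∀ d : Perm α, numCycles c < numCycles d → PrefixCountFormula d)
    (hsep : SeparatedMarks c S D) (hM : ∀ m ∈ S ∪ D, ¬ c.SameCycle a m) (hca : c a ≠ a) :
    ((markedPrefixes c S D).card : ℚ) = markedWeight c (S ∪ D) := by
  rw [card_markedPrefixes_eq_add c a, Nat.cast_add,
    card_markedPrefixes_of_mem_right ih (hsep.insert_right hM) (Finset.mem_insert_self a D) hca,
    card_filter_markedPrefixes_eq_sum_markedWeight ih hsep (fun m hm _ => hM m hm)
      fun haD => hM a (Finset.mem_union_right S haD) (.refl _ _),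
    sum_cutPairs_markedWeight_trisect hM, Finset.union_insert, add_sub_cancel]

theorem prefixCountFormula (c : Perm α) : PrefixCountFormula c := by
  induction hk : Fintype.card α - numCycles c using Nat.strong_induction_on generalizing c with
  | _ k ih =>
    have ih (d : Perm α) (hd : numCycles c < numCycles d) : PrefixCountFormula d :=
      ih _ (by have := numCycles_le_card d; omega) d rfl
    intro S D hsep
    rcases eq_or_ne c 1 with rfl | hc
    · rw [markedPrefixes_one, Finset.card_singleton, Nat.cast_one, markedWeight_one]
    by_cases hmoved : ∃ m ∈ S ∪ D, c m ≠ m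
    · obtain ⟨m, hm, hcm⟩ := hmoved
      rcases Finset.mem_union.1 hm with hm | hm
      · exact card_markedPrefixes_of_mem_left ih hsep hm hcm
      · exact card_markedPrefixes_of_mem_right ih hsep hm hcm
    · push Not at hmoved
      obtain ⟨a, ha⟩ := not_forall.1 (mt Perm.ext hc)
      exact card_markedPrefixes_of_notMem ih hsep
        (fun m hm hsame => ha (hsame.apply_eq_self_iff.2 (hmoved m hm))) ha

open scoped Classical in
theorem card_isOddPrefix (c : Perm α) :
    (Nat.card {x // IsOddPrefix c x} : ℚ) = cycleWeight (raneyWeight 2) c := by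
  have h := prefixCountFormula c ∅ ∅ (.empty c)
  rw [markedWeight, Finset.empty_union, Finset.prod_empty, mul_one] at h
  rw [← h, Nat.card_eq_fintype_card, Fintype.card_subtype, markedPrefixes]
  simp

end PrefixCount

section Length

variable {G : Type*} [Group G] {T : Set G} {x : G}

lemma exists_list_length_eq_lenT {s : List G} (hs : ∀ t ∈ s, t ∈ T) (hprod : s.prod = x) :
    ∃ s' : List G, (∀ t ∈ s', t ∈ T) ∧ s'.prod = x ∧ s'.length = lenT T x :=
  Nat.sInf_mem (s := {n | ∃ l : List G, (∀ t ∈ l, t ∈ T) ∧ l.prod = x ∧ l.length = n})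
    ⟨s.length, s, hs, hprod, rfl⟩

lemma lenT_le_length {s : List G} (hs : ∀ t ∈ s, t ∈ T) (hprod : s.prod = x) :
    lenT T x ≤ s.length :=
  Nat.sInf_le ⟨s, hs, hprod, rfl⟩

end Length

section ThreeCycleLength

variable {α : Type*} [Fintype α] [DecidableEq α] {c x : Perm α}

lemma mem_alternatingGroup_iff_exists_list :
    x ∈ alternatingGroup α ↔ ∃ s : List (Perm α), (∀ t ∈ s, t.IsThreeCycle) ∧ s.prod = x := by
  constructor
  · intro hx
    rw [← closure_three_cycles_eq_alternating, ← Subgroup.mem_toSubmonoid,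
      Subgroup.closure_toSubmonoid] at hx
    obtain ⟨s, hs, rfl⟩ := Submonoid.exists_list_of_mem_closure hx
    refine ⟨s, fun t ht => ?_, rfl⟩
    rcases hs t ht with ht | ht
    · exact ht
    · exact IsThreeCycle.inv_iff.1 ht
  · rintro ⟨s, hs, rfl⟩
    exact list_prod_mem fun t ht => (hs t ht).mem_alternatingGroup

lemma mem_alternatingGroup_of_lenT_pos (h : 0 < lenT {t : Perm α | t.IsThreeCycle} x) :
    x ∈ alternatingGroup α := by
  obtain ⟨-, s, hs, hprod, -⟩ := Nat.nonempty_of_pos_sInf h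
  exact mem_alternatingGroup_iff_exists_list.2 ⟨s, hs, hprod⟩

lemma HasOddCycles.numCycles_add_two_mul_lenT (hc : HasOddCycles c) :
    numCycles c + 2 * lenT {t : Perm α | t.IsThreeCycle} c = Fintype.card α := by
  obtain ⟨s, hs, hprod, hcard⟩ := hc.exists_list_isThreeCycle
  obtain ⟨s', hs', rfl, hlen⟩ := exists_list_length_eq_lenT
    (T := {t : Perm α | t.IsThreeCycle}) hs hprod
  have hlower := card_le_numCycles_prod_add hs'
  have hupper := lenT_le_length (T := {t : Perm α | t.IsThreeCycle}) hs hprod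
  omega

lemma exists_list_length_eq_lenT_of_mem_alternatingGroup (hx : x ∈ alternatingGroup α) :
    ∃ s : List (Perm α), (∀ t ∈ s, t.IsThreeCycle) ∧ s.prod = x
      ∧ s.length = lenT {t : Perm α | t.IsThreeCycle} x := by
  obtain ⟨s, hs, hprod⟩ := mem_alternatingGroup_iff_exists_list.1 hx
  exact exists_list_length_eq_lenT hs hprod

/-- If `c = 1`, the left side also holds for every odd permutation `x`, as `lenT` is then `0`. -/
theorem leT_isThreeCycle_iff_isOddPrefix (hc : HasOddCycles c) (hne : c ≠ 1) :
    leT {t : Perm α | t.IsThreeCycle} x c ↔ IsOddPrefix c x := by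
  have hlen := hc.numCycles_add_two_mul_lenT
  rw [leT]
  constructor
  · intro hadd
    have hpos : 0 < lenT {t : Perm α | t.IsThreeCycle} c := Nat.pos_of_ne_zero fun hzero =>
      hne (eq_one_of_numCycles_eq_card (by omega))
    have hiff : x⁻¹ * c ∈ alternatingGroup α ↔ x ∈ alternatingGroup α := by
      rw [mul_mem_cancel_right (mem_alternatingGroup_of_lenT_pos hpos), inv_mem_iff]
    have hx : x ∈ alternatingGroup α := by
      by_cases hxpos : 0 < lenT {t : Perm α | t.IsThreeCycle} x
      · exact mem_alternatingGroup_of_lenT_pos hxpos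
      · exact hiff.1 (mem_alternatingGroup_of_lenT_pos (by omega))
    obtain ⟨s, hs, hsx, hslen⟩ := exists_list_length_eq_lenT_of_mem_alternatingGroup hx
    obtain ⟨s', hs', hsxc, hslen'⟩ :=
      exists_list_length_eq_lenT_of_mem_alternatingGroup (hiff.2 hx)
    have hlower := card_le_numCycles_prod_add hs
    have hlower' := card_le_numCycles_prod_add hs'
    have hupper := numCycles_le_numCycles_mul_prod_add x hs'
    have hupper' := numCycles_le_numCycles_mul_prod_add (x⁻¹ * c) hs
    rw [hsxc, mul_inv_cancel_left] at hupper
    rw [hsx, numCycles_mul_comm (x⁻¹ * c), mul_inv_cancel_left] at hupper'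
    have hodd := hasOddCycles_prod_of_length hs
    have hodd' := hasOddCycles_prod_of_length hs'
    rw [hsx] at hlower hodd
    rw [hsxc] at hlower' hodd'
    exact ⟨hodd (by omega), hodd' (by omega), by omega⟩
  · rintro ⟨hx, hxc, hadd⟩
    have := hx.numCycles_add_two_mul_lenT
    have := hxc.numCycles_add_two_mul_lenT
    omega

end ThreeCycleLength

section LongCycle

lemma parts_partition_finRotate {N : ℕ} (hN : 2 ≤ N) : (finRotate N).partition.parts = {N} := by
  simp [parts_partition, cycleType_finRotate_of_le hN, support_finRotate_of_le hN]

lemma hasOddCycles_finRotate {n : ℕ} (hn : 1 ≤ n) : HasOddCycles (finRotate (2 * n + 1)) := by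
  rw [HasOddCycles, parts_partition_finRotate (by omega)]
  exact fun m hm => Multiset.mem_singleton.1 hm ▸ odd_two_mul_add_one n

lemma cycleWeight_oddExtend_finRotate {R : Type*} [CommSemiring R] (f : ℕ → R) {n : ℕ}
    (hn : 1 ≤ n) : cycleWeight (oddExtend f) (finRotate (2 * n + 1)) = f n := by
  rw [cycleWeight, parts_partition_finRotate (by omega), Multiset.map_singleton,
    Multiset.prod_singleton, oddExtend_two_mul_add_one]

theorem card_leT_finRotate {n : ℕ} (hn : 1 ≤ n) :
    Nat.card {x // leT (threeCycles (2 * n + 1)) x (finRotate (2 * n + 1))} = raney 3 n 2 := by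
  have hne : finRotate (2 * n + 1) ≠ 1 := (isCycle_finRotate_of_le (by omega)).ne_one
  have h := card_isOddPrefix (finRotate (2 * n + 1))
  rw [raneyWeight, cycleWeight_oddExtend_finRotate _ hn] at h
  simp only [threeCycles, leT_isThreeCycle_iff_isOddPrefix (hasOddCycles_finRotate hn) hne]
  exact_mod_cast h

theorem numFactorizations_finRotate {n : ℕ} (hn : 1 ≤ n) :
    numFactorizations {t | t.IsThreeCycle} n (finRotate (2 * n + 1)) = (2 * n + 1) ^ (n - 1) := by
  have hnum : numCycles (finRotate (2 * n + 1)) + 2 * n = Fintype.card (Fin (2 * n + 1)) := by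
    rw [numCycles, parts_partition_finRotate (by omega), Multiset.card_singleton,
      Fintype.card_fin, add_comm]
  have h := numFactorizations_isThreeCycle hnum
  rw [abelWeight, cycleWeight_oddExtend_finRotate _ hn] at h
  obtain ⟨m, rfl⟩ := Nat.exists_eq_add_of_le' hn
  rw [abelPoly, mul_div_cancel₀ _ (mod_cast (m + 1).factorial_ne_zero), one_mul, add_comm 1] at h
  exact_mod_cast h

end LongCycle

theorem stmt17 (n : ℕ) (hn : 1 ≤ n) :
    -- |ONC_{2n+1}| = (1/(n+1)) C(3n+1, n) ...
    (n+1) * Nat.card {x : Perm (Fin (2*n+1)) //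
        leT (threeCycles (2*n+1)) x (finRotate (2*n+1))}
      = Nat.choose (3*n+1) n
    -- ... and the number of maximal chains of [e,c]₃, i.e. of minimal factorizations
    -- of c into n 3-cycles, is (2n+1)^{n-1}.
    ∧ Nat.card {w : Fin n → Perm (Fin (2*n+1)) //
        (∀ i, (w i).IsThreeCycle) ∧ (List.ofFn w).prod = finRotate (2*n+1)}
      = (2*n+1) ^ (n-1) := by
  constructor
  · rw [card_leT_finRotate hn, succ_mul_raney_three_two]
  · exact numFactorizations_finRotate hn
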